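/- arXiv:1808.02148 — 3 statements merged into one kernel-verified Lean document; each statement's English description precedes it below -/
import Mathlib

section
/- Let Q = ℚ(√a,√b) be a biquadratic field, with a, b distinct square-free integers not equal to 0 or 1, and set ξ = gcd(|a|,|b|). Then 𝓕₄(Q) is nonempty if and only if at least one of the following holds: b is a norm from ℚ(√a); −b is a norm from ℚ(√a); −a is a norm from ℚ(√b). -/
/-!
In a `D₄`-extension `L` of `ℚ` the rotation `r` of order four fixes exactly one of the three quadratic
subfields of the biquadratic field `Q`. Suppose it moves `√A` and `√B`, and choose a reflection `s`
fixing `√A` and negating `√B`. The fixed field of `s` is `ℚ(√A)(t)` with `t² ∈ ℚ(√A)`, and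
`t · r t` is a rational multiple of `√B`, so that `B` is a norm from `ℚ(√A)` (`norm_of_dihedral`).
Taking `(A, B)` to be `(a, b)`, `(a, ab)` or `(b, ab)`, according to whether `r` fixes `√(ab)`, `√b`
or `√a`, and using that `-a` is a norm from `ℚ(√a)` and `-b` one from `ℚ(√b)`, gives the three
alternatives (`norm_condition_of_dihedral`).

Conversely, if `B = x² - A y²` with `A`, `B`, `AB` not squares, let `t² = x + y √A` and
`t'² = x - y √A` with `t t' = √B`. Automorphisms with prescribed signs on `√A` and `√B` exist, and
they act on the square with vertices `±t, ±t'` by a rotation of order four and a reflection; so the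
Galois closure `ℚ(t, t')` of the quartic field `ℚ(t)` has group `D₄` and contains `√A` and `√B`
(`exists_quartic`).
-/


open IntermediateField

noncomputable section

abbrev Qbar : Type := AlgebraicClosure ℚ

noncomputable def galCl (K : IntermediateField ℚ Qbar) : IntermediateField ℚ Qbar :=
  normalClosure ℚ K Qbar

def IsD4Quartic (K : IntermediateField ℚ Qbar) : Prop :=
  Module.finrank ℚ K = 4 ∧
    Nonempty ((galCl K ≃ₐ[ℚ] galCl K) ≃* DihedralGroup 4)

open scoped Classical in
noncomputable def absDisc (K : IntermediateField ℚ Qbar) : ℕ :=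
  if h : FiniteDimensional ℚ K then
    haveI := h
    haveI : NumberField K := ⟨⟩
    (NumberField.discr K).natAbs
  else 0

def F4 (Q : IntermediateField ℚ Qbar) : Set (IntermediateField ℚ Qbar) :=
  {K | IsD4Quartic K ∧ Q ≤ galCl K}

def F4X (Q : IntermediateField ℚ Qbar) (X : ℝ) : Set (IntermediateField ℚ Qbar) :=
  {K | K ∈ F4 Q ∧ (absDisc K : ℝ) ≤ X}

noncomputable def torsionCount (K : IntermediateField ℚ Qbar) (ℓ : ℕ) : ℕ :=
  Nat.card {x : ClassGroup (NumberField.RingOfIntegers K) // x ^ ℓ = 1}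

/-! ### Norm relations in dihedral extensions -/

section Forward
variable {L : Type*} [Field L] [Algebra ℚ L]

/-- `r 1` and any one reflection `sr i` generate `DihedralGroup 4`, so what both fix is rational. -/
theorem rational_of_fixed_generators [IsGalois ℚ L]
    (e : (L ≃ₐ[ℚ] L) ≃* DihedralGroup 4) (i : ZMod 4) (x : L)
    (hr : e.symm (.r 1) x = x) (hs : e.symm (.sr i) x = x) :
    ∃ q : ℚ, algebraMap ℚ L q = x := by
  have key : ∀ d : DihedralGroup 4, ∃ k : ℕ, d = .r 1 ^ k ∨ d = .sr i * .r 1 ^ k := by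
    rintro (j | j)
    · exact ⟨j.val, by left; simp⟩
    · exact ⟨(j - i).val, by right; simp⟩
  have hpow : ∀ k : ℕ, ((e.symm (.r 1)) ^ k) x = x := by
    intro k
    induction k with
    | zero => rfl
    | succ k ih => rw [pow_succ, AlgEquiv.mul_apply, hr, ih]
  refine (InfiniteGalois.mem_range_algebraMap_iff_fixed x).mpr fun g => ?_
  obtain ⟨k, hk | hk⟩ := key (e g)
  · rw [← e.symm_apply_apply g, hk, map_pow, hpow]
  · rw [← e.symm_apply_apply g, hk, map_mul, map_pow, AlgEquiv.mul_apply, hpow, hs]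

/-- The fixed field of the reflection `sr i` is stable under the central rotation `r 2`, which acts on
it nontrivially because `r 2` does not lie in `⟨sr i⟩`; hence it contains an eigenvector of
eigenvalue `-1`. -/
theorem exists_reflection_eigenvector [FiniteDimensional ℚ L]
    (e : (L ≃ₐ[ℚ] L) ≃* DihedralGroup 4) (i : ZMod 4) :
    ∃ t : L, t ≠ 0 ∧ e.symm (.sr i) t = t ∧ e.symm (.r 1) (e.symm (.r 1) t) = -t := by
  set r := e.symm (.r 1) with hrdef
  set s := e.symm (.sr i) with hsdef
  have hss : ∀ x, s (s x) = x := fun x => by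
    rw [← AlgEquiv.mul_apply, hsdef, ← map_mul]; simp
  have hr4 : ∀ x, r (r (r (r x))) = x := fun x => by
    simp only [← AlgEquiv.mul_apply, hrdef, ← map_mul]
    have : (.r 1 * (.r 1 * (.r 1 * .r 1)) : DihedralGroup 4) = 1 := by decide
    rw [this]; simp
  have hcomm : ∀ x, s (r (r x)) = r (r (s x)) := fun x => by
    simp only [← AlgEquiv.mul_apply, hrdef, hsdef, ← map_mul]
    have : ∀ i, (.sr i * (.r 1 * .r 1) : DihedralGroup 4) = .r 1 * (.r 1 * .sr i) := by decide
    rw [this]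
  have hnot : r * r ∉ Subgroup.zpowers s := by
    rintro ⟨k, hk⟩
    have hk' := congrArg e hk
    simp only [hrdef, hsdef, map_mul, map_zpow, MulEquiv.apply_symm_apply] at hk'
    rcases Int.even_or_odd' k with ⟨m, rfl | rfl⟩
    · rw [zpow_mul, zpow_ofNat, pow_two, DihedralGroup.sr_mul_self, one_zpow] at hk'
      revert hk'; decide
    · rw [zpow_add, zpow_mul, zpow_ofNat, pow_two, DihedralGroup.sr_mul_self, one_zpow] at hk'
      simp at hk'
  obtain ⟨t, hst, hrt⟩ : ∃ t, s t = t ∧ r (r t) ≠ t := by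
    by_contra! h
    apply hnot
    rw [← IntermediateField.fixingSubgroup_fixedField (Subgroup.zpowers s)]
    rw [IntermediateField.mem_fixingSubgroup_iff]
    intro x hx
    exact h x (hx ⟨s, Subgroup.mem_zpowers s⟩)
  refine ⟨t - r (r t), sub_ne_zero.mpr hrt.symm, ?_, ?_⟩
  · rw [map_sub, hcomm, hst]
  · rw [map_sub, map_sub, hr4]; ring

/-- If `u = √A` is negated by the rotation `r` and fixed by a reflection `s`, and `v = √B` is negated
by both, then `B` is a norm from `ℚ(√A)`. With `t` as in `exists_reflection_eigenvector`, `t²` lies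
in `ℚ(u)` and has norm `(t · r t)²`; as `t · r t` is negated by `r` and `s`, it is a rational
multiple of `v`. -/
theorem norm_of_dihedral [IsGalois ℚ L] [FiniteDimensional ℚ L]
    (e : (L ≃ₐ[ℚ] L) ≃* DihedralGroup 4) (i : ZMod 4) (A B : ℚ) (u v : L)
    (hu0 : u ≠ 0) (hv0 : v ≠ 0)
    (hu : u ^ 2 = algebraMap ℚ L A) (hv : v ^ 2 = algebraMap ℚ L B)
    (hru : e.symm (.r 1) u = -u) (hsu : e.symm (.sr i) u = u)
    (hrv : e.symm (.r 1) v = -v) (hsv : e.symm (.sr i) v = -v) :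
    ∃ x y : ℚ, x ^ 2 - A * y ^ 2 = B := by
  have : CharZero L := algebraRat.charZero L
  obtain ⟨t, ht0, hst, hrt⟩ := exists_reflection_eigenvector e i
  have hrat := rational_of_fixed_generators e i
  have hsr : e.symm (.sr i) (e.symm (.r 1) t) = - e.symm (.r 1) t := by
    have h1 : e.symm (.sr i) (e.symm (.r 1) t)
        = e.symm (.r 1) (e.symm (.r 1) (e.symm (.r 1) (e.symm (.sr i) t))) := by
      simp only [← AlgEquiv.mul_apply, ← map_mul]
      have : ∀ i, (.sr i * .r 1 : DihedralGroup 4) = .r 1 * (.r 1 * (.r 1 * .sr i)) := by decide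
      rw [this]
    rw [h1, hst, hrt, map_neg]
  generalize e.symm (.r 1) = r at *
  generalize e.symm (.sr i) = s at *
  have hrt0 : r t ≠ 0 := by simpa using ht0
  obtain ⟨q, hq⟩ := hrat (t * r t / v) (by simp only [map_div₀, map_mul, hrt, hrv]; field_simp)
    (by simp only [map_div₀, map_mul, hst, hsr, hsv]; field_simp)
  obtain ⟨x, hx⟩ := hrat ((t ^ 2 + r t ^ 2) / 2)
    (by simp only [map_div₀, map_add, map_pow, hrt, map_ofNat]; ring)
    (by simp only [map_div₀, map_add, map_pow, hst, hsr, map_ofNat]; ring)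
  obtain ⟨y, hy⟩ := hrat ((t ^ 2 - r t ^ 2) / (2 * u))
    (by simp only [map_div₀, map_sub, map_pow, map_mul, hrt, hru, map_ofNat]; field_simp; ring)
    (by simp only [map_div₀, map_sub, map_pow, map_mul, hst, hsr, hsu, map_ofNat]; ring)
  have hq0 : q ≠ 0 := by
    rintro rfl
    rw [map_zero] at hq
    exact div_ne_zero (mul_ne_zero ht0 hrt0) hv0 hq.symm
  refine ⟨x / q, y / q, ?_⟩
  have h2 : x ^ 2 - A * y ^ 2 = B * q ^ 2 := by
    apply (algebraMap ℚ L).injective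
    simp only [map_sub, map_mul, map_pow, hx, hy, hq, ← hu, ← hv]
    field_simp
    ring
  field_simp
  linarith

/-- The rotation `r` acts by signs on `√a` and `√b`, and the three alternatives record which of `√(ab)`,
`√b`, `√a` it fixes. It cannot fix both `√a` and `√b`, since then a reflection would have to negate
both and `√(ab)` would be rational. -/
theorem norm_condition_of_dihedral [IsGalois ℚ L] [FiniteDimensional ℚ L]
    (e : (L ≃ₐ[ℚ] L) ≃* DihedralGroup 4) (a b : ℚ) (u v : L)
    (hu : u ^ 2 = algebraMap ℚ L a) (hv : v ^ 2 = algebraMap ℚ L b)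
    (hA : ¬ IsSquare a) (hB : ¬ IsSquare b) (hAB : ¬ IsSquare (a * b)) :
    (∃ x y : ℚ, x ^ 2 - a * y ^ 2 = b) ∨ (∃ x y : ℚ, x ^ 2 - a * y ^ 2 = -b) ∨
      (∃ x y : ℚ, x ^ 2 - b * y ^ 2 = -a) := by
  have ha0 : a ≠ 0 := by rintro rfl; simp at hA
  have hb0 : b ≠ 0 := by rintro rfl; simp at hB
  have hu0 : u ≠ 0 := by rintro rfl; exact ha0 ((algebraMap ℚ L).injective (by rw [← hu, map_zero]; ring))
  have hv0 : v ≠ 0 := by rintro rfl; exact hb0 ((algebraMap ℚ L).injective (by rw [← hv, map_zero]; ring))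
  have sign : ∀ (w : L) (c : ℚ), w ^ 2 = algebraMap ℚ L c → ∀ g : L ≃ₐ[ℚ] L, g w = w ∨ g w = -w := by
    intro w c hw g
    apply sq_eq_sq_iff_eq_or_eq_neg.mp
    rw [← map_pow, hw, AlgEquiv.commutes]
  have nsq : ∀ (w : L) (c : ℚ), w ^ 2 = algebraMap ℚ L c → ¬ IsSquare c →
      ∀ i, e.symm (.r 1) w = w → e.symm (.sr i) w = w → False := by
    intro w c hw hc i h1 h2
    obtain ⟨q, rfl⟩ := rational_of_fixed_generators e i w h1 h2
    rw [← map_pow] at hw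
    exact hc ⟨q, by rw [← (algebraMap ℚ L).injective hw, sq]⟩
  have huv : (u * v) ^ 2 = algebraMap ℚ L (a * b) := by rw [mul_pow, hu, hv, map_mul]
  have huv0 := mul_ne_zero hu0 hv0
  have hs1 : ∀ x, e.symm (.sr 1) x = e.symm (.sr 0) (e.symm (.r 1) x) := fun x => by
    rw [← AlgEquiv.mul_apply, ← map_mul]; rfl
  -- If the rotation negates `w` and `z`, then `sr 0` or `sr 1`
  -- fixes `w` and negates `z`, because `w * z` is irrational and hence not fixed by `sr 0`.
  have core : ∀ (w z : L) (A B : ℚ), w ≠ 0 → z ≠ 0 → w ^ 2 = algebraMap ℚ L A →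
      z ^ 2 = algebraMap ℚ L B → ¬ IsSquare (A * B) → e.symm (.r 1) w = -w → e.symm (.r 1) z = -z →
      ∃ x y : ℚ, x ^ 2 - A * y ^ 2 = B := by
    intro w z A B hw0 hz0 hw hz hAB hrw hrz
    have hwz : (w * z) ^ 2 = algebraMap ℚ L (A * B) := by rw [mul_pow, hw, hz, map_mul]
    have no := nsq _ _ hwz hAB 0 (by rw [map_mul, hrw, hrz]; ring)
    rw [map_mul] at no
    rcases sign w A hw (e.symm (.sr 0)) with h1 | h1 <;>
      rcases sign z B hz (e.symm (.sr 0)) with h2 | h2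
    · exact (no (by rw [h1, h2])).elim
    · exact norm_of_dihedral e 0 A B w z hw0 hz0 hw hz hrw h1 hrz h2
    · exact norm_of_dihedral e 1 A B w z hw0 hz0 hw hz hrw
        (by rw [hs1, hrw, map_neg, h1, neg_neg]) hrz (by rw [hs1, hrz, map_neg, h2])
    · exact (no (by rw [h1, h2]; ring)).elim
  rcases sign u a hu (e.symm (.r 1)) with h1 | h1 <;>
    rcases sign v b hv (e.symm (.r 1)) with h2 | h2
  · exfalso
    have A := (sign u a hu (e.symm (.sr 0))).resolve_left (nsq u a hu hA 0 h1)
    have B := (sign v b hv (e.symm (.sr 0))).resolve_left (nsq v b hv hB 0 h2)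
    exact nsq _ _ huv hAB 0 (by rw [map_mul, h1, h2]) (by rw [map_mul, A, B]; ring)
  -- Here `ab` is a norm from `ℚ(√b)`; dividing by the norm `-b` of `√b` shows that `-a` is one too.
  · right; right
    obtain ⟨x, y, h⟩ := core v (u * v) b (a * b) hv0 huv0 hv huv
      (by rintro ⟨q, hq⟩; exact hA ⟨q / b, by field_simp; linarith⟩) h2
      (by rw [map_mul, h1, h2]; ring)
    exact ⟨y, x / b, by field_simp; linarith⟩
  · right; left
    obtain ⟨x, y, h⟩ := core u (u * v) a (a * b) hu0 huv0 hu huv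
      (by rintro ⟨q, hq⟩; exact hB ⟨q / a, by field_simp; linarith⟩) h1
      (by rw [map_mul, h1, h2]; ring)
    exact ⟨y, x / a, by field_simp; linarith⟩
  · left
    exact core u v a b hu0 hv0 hu hv hAB h1 h2

end Forward

/-- The universal property of the presentation `r⁴ = s² = 1`, `r s r = s` of `DihedralGroup 4`. -/
theorem exists_dihedral_hom {G : Type*} [Group G] (r s : G) (hr : r ^ 4 = 1) (hs : s * s = 1)
    (hrs : r * s * r = s) :
    ∃ f : DihedralGroup 4 →* G, (∀ i, f (.r i) = r ^ i.val) ∧ ∀ i, f (.sr i) = s * r ^ i.val := by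
  have hadd : ∀ i j : ZMod 4, r ^ (i + j).val = r ^ i.val * r ^ j.val := by
    intro i j
    rw [ZMod.val_add, ← pow_add, ← pow_eq_pow_mod _ hr]
  have hneg : ∀ i : ZMod 4, r ^ (-i).val = (r ^ i.val)⁻¹ := by
    intro i
    rw [eq_inv_iff_mul_eq_one, ← hadd]; simp
  have hsemi : ∀ k : ℕ, r ^ k * s = s * (r ^ k)⁻¹ := by
    intro k
    have h : SemiconjBy s r⁻¹ r := by
      rw [SemiconjBy, mul_inv_eq_iff_eq_mul, hrs]
    have := (h.pow_right k).eq
    rw [← this, inv_pow]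
  refine ⟨MonoidHom.mk' (fun
    | .r i => r ^ i.val
    | .sr i => s * r ^ i.val) ?_, fun _ => rfl, fun _ => rfl⟩
  rintro (i | i) (j | j)
  · exact hadd i j
  · change s * r ^ (j - i).val = r ^ i.val * (s * r ^ j.val)
    rw [sub_eq_neg_add, hadd, hneg, ← mul_assoc, ← mul_assoc, hsemi]
  · change s * r ^ (i + j).val = s * r ^ i.val * r ^ j.val
    rw [hadd, mul_assoc]
  · change r ^ (j - i).val = s * r ^ i.val * (s * r ^ j.val)
    rw [sub_eq_neg_add, hadd, hneg, mul_assoc, ← mul_assoc (r ^ i.val), hsemi, mul_assoc,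
      ← mul_assoc s, hs, one_mul]

/-! ### Constructing dihedral extensions from norms -/

section Construction
variable {E : Type*} [Field E] [Algebra ℚ E]

/-- An irrational square root has itself and its negative as conjugates. -/
theorem exists_neg [IsGalois ℚ E] (w : E) (c : ℚ) (hw : w ^ 2 = algebraMap ℚ E c) (hc : ¬ IsSquare c) :
    ∃ g : E ≃ₐ[ℚ] E, g w = -w := by
  by_contra! h
  obtain ⟨q, rfl⟩ := (InfiniteGalois.mem_range_algebraMap_iff_fixed w).mpr fun g =>
    (sq_eq_sq_iff_eq_or_eq_neg.mp (by rw [← map_pow, hw, AlgEquiv.commutes])).resolve_right (h g)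
  rw [← map_pow] at hw
  exact hc ⟨q, by rw [← (algebraMap ℚ E).injective hw, sq]⟩

/-- If none of `A`, `B`, `AB` is a square, the sign patterns `(-, -)` and `(+, -)` on `(√A, √B)` are
realised by automorphisms: the patterns form a subgroup of `{±1}²` contained in no subgroup of
index two. -/
theorem exists_signs [IsGalois ℚ E] (u v : E) (A B : ℚ)
    (hu : u ^ 2 = algebraMap ℚ E A) (hv : v ^ 2 = algebraMap ℚ E B)
    (hA : ¬ IsSquare A) (hB : ¬ IsSquare B) (hAB : ¬ IsSquare (A * B)) :
    (∃ g : E ≃ₐ[ℚ] E, g u = -u ∧ g v = -v) ∧ (∃ g : E ≃ₐ[ℚ] E, g u = u ∧ g v = -v) := by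
  have sign : ∀ (w : E) (c : ℚ), w ^ 2 = algebraMap ℚ E c → ∀ g : E ≃ₐ[ℚ] E, g w = w ∨ g w = -w := by
    intro w c hw g
    apply sq_eq_sq_iff_eq_or_eq_neg.mp
    rw [← map_pow, hw, AlgEquiv.commutes]
  have h0 : ∀ (w : E) (c : ℚ), w ^ 2 = algebraMap ℚ E c → ¬ IsSquare c → w ≠ 0 := by
    rintro w c hw hc rfl
    apply hc
    have : c = 0 := (algebraMap ℚ E).injective (by rw [← hw, map_zero]; ring)
    rw [this]; exact IsSquare.zero
  have : CharZero E := algebraRat.charZero E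
  have hu0 := h0 u A hu hA
  have hv0 := h0 v B hv hB
  obtain ⟨f, hf⟩ := exists_neg u A hu hA
  obtain ⟨g, hg⟩ := exists_neg v B hv hB
  obtain ⟨h, hh⟩ := exists_neg (u * v) (A * B) (by rw [mul_pow, hu, hv, map_mul]) hAB
  have hh' : ¬ (h u = -u ∧ h v = -v) := by
    rintro ⟨h1, h2⟩
    rw [map_mul, h1, h2, neg_mul_neg] at hh
    exact mul_ne_zero hu0 hv0 (self_eq_neg.mp hh)
  have hh'' : ¬ (h u = u ∧ h v = v) := by
    rintro ⟨h1, h2⟩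
    rw [map_mul, h1, h2] at hh
    exact mul_ne_zero hu0 hv0 (self_eq_neg.mp hh)
  have fv := sign v B hv f
  have gu := sign u A hu g
  have hu' := sign u A hu h
  have hv' := sign v B hv h
  constructor
  · rcases fv with fv | fv
    · rcases gu with gu | gu
      · exact ⟨f * g, by simp [gu, hf], by simp [fv, hg]⟩
      · exact ⟨g, gu, hg⟩
    · exact ⟨f, hf, fv⟩
  · rcases gu with gu | gu
    · exact ⟨g, gu, hg⟩
    rcases fv with fv | fv
    · exact ⟨f * g, by simp [gu, hf], by simp [fv, hg]⟩
    rcases hu' with h1 | h1 <;> rcases hv' with h2 | h2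
    · exact (hh'' ⟨h1, h2⟩).elim
    · exact ⟨h, h1, h2⟩
    · exact ⟨f * h, by simp [hf, h1], by simp [h2, fv]⟩
    · exact (hh' ⟨h1, h2⟩).elim

/-- The square roots `t, t'` of `x ± y √A` satisfy `t t' = √B`, so an automorphism with prescribed
signs on `√A` and `√B` permutes `±t, ±t'` as a rotation or a reflection of a square, up to a power
of the rotation. -/
theorem exists_rotation_reflection [IsGalois ℚ E] (t t' u v : E) (A B x y : ℚ)
    (hu : u ^ 2 = algebraMap ℚ E A) (hv : v ^ 2 = algebraMap ℚ E B)
    (hA : ¬ IsSquare A) (hB : ¬ IsSquare B) (hAB : ¬ IsSquare (A * B))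
    (ht : t ^ 2 = algebraMap ℚ E x + algebraMap ℚ E y * u)
    (ht' : t' ^ 2 = algebraMap ℚ E x - algebraMap ℚ E y * u) (htt : t * t' = v) (hv0 : v ≠ 0) :
    (∃ r : E ≃ₐ[ℚ] E, r t = t' ∧ r t' = -t) ∧ (∃ s : E ≃ₐ[ℚ] E, s t = t ∧ s t' = -t') := by
  have ht0 : t ≠ 0 := by rintro rfl; simp at htt; exact hv0 htt.symm
  have ht0' : t' ≠ 0 := by rintro rfl; simp at htt; exact hv0 htt.symm
  obtain ⟨⟨f, fu, fv⟩, ⟨g, gu, gv⟩⟩ := exists_signs u v A B hu hv hA hB hAB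
  have hr : ∃ r : E ≃ₐ[ℚ] E, r t = t' ∧ r t' = -t := by
    have h1 : f t ^ 2 = t' ^ 2 := by
      rw [← map_pow, ht, ht', map_add, map_mul, fu, AlgEquiv.commutes, AlgEquiv.commutes]; ring
    rw [← htt, map_mul] at fv
    rcases sq_eq_sq_iff_eq_or_eq_neg.mp h1 with h | h
    · exact ⟨f, h, mul_left_cancel₀ ht0' (by rw [h] at fv; rw [fv]; ring)⟩
    · have h' : f t' = t := mul_left_cancel₀ ht0' (by rw [h] at fv; linear_combination -fv)
      exact ⟨f * f * f, by simp [h, h'], by simp [h, h']⟩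
  refine ⟨hr, ?_⟩
  obtain ⟨r, r1, r2⟩ := hr
  have h1 : g t ^ 2 = t ^ 2 := by
    rw [← map_pow, ht, map_add, map_mul, gu, AlgEquiv.commutes, AlgEquiv.commutes]
  rw [← htt, map_mul] at gv
  rcases sq_eq_sq_iff_eq_or_eq_neg.mp h1 with h | h
  · exact ⟨g, h, mul_left_cancel₀ ht0 (by rw [h] at gv; rw [gv]; ring)⟩
  · have h' : g t' = t' := mul_left_cancel₀ ht0 (by rw [h] at gv; linear_combination -gv)
    exact ⟨r * r * g, by simp [h, r1, r2], by simp [h', r1, r2]⟩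

theorem conjugates_distinct (t t' : E) (ht0 : t ≠ 0) (r : E ≃ₐ[ℚ] E) (r1 : r t = t')
    (r2 : r t' = -t) : t ≠ t' ∧ t ≠ -t' ∧ t ≠ -t ∧ t' ≠ -t' := by
  have : CharZero E := algebraRat.charZero E
  have ht0' : t' ≠ 0 := by rw [← r1]; simpa using ht0
  refine ⟨?_, ?_, fun h => ht0 (self_eq_neg.mp h), fun h => ht0' (self_eq_neg.mp h)⟩
  · intro h
    rw [← h] at r1 r2
    exact ht0 (self_eq_neg.mp (r1.symm.trans r2))
  · intro h
    have h' : t' = -t := by rw [h, neg_neg]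
    rw [h'] at r1 r2
    rw [map_neg, r1, neg_neg] at r2
    exact ht0 (self_eq_neg.mp r2)

/-- When `t, t'` determine automorphisms, the rotation and the reflection generate the Galois group:
any `g` becomes, after multiplication by a power of the rotation, an automorphism fixing `t`, which
is then the identity or the reflection. -/
theorem nonempty_dihedral [IsGalois ℚ E] (t t' u v : E) (A B x y : ℚ)
    (hu : u ^ 2 = algebraMap ℚ E A) (hv : v ^ 2 = algebraMap ℚ E B)
    (hA : ¬ IsSquare A) (hB : ¬ IsSquare B) (hAB : ¬ IsSquare (A * B))
    (ht : t ^ 2 = algebraMap ℚ E x + algebraMap ℚ E y * u)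
    (ht' : t' ^ 2 = algebraMap ℚ E x - algebraMap ℚ E y * u) (htt : t * t' = v) (hv0 : v ≠ 0)
    (hgen : ∀ g h : E ≃ₐ[ℚ] E, g t = h t → g t' = h t' → g = h) :
    Nonempty ((E ≃ₐ[ℚ] E) ≃* DihedralGroup 4) := by
  have ht0 : t ≠ 0 := by rintro rfl; simp at htt; exact hv0 htt.symm
  obtain ⟨⟨r, r1, r2⟩, ⟨s, s1, s2⟩⟩ :=
    exists_rotation_reflection t t' u v A B x y hu hv hA hB hAB ht ht' htt hv0
  obtain ⟨d1, d2, d3, d4⟩ := conjugates_distinct t t' ht0 r r1 r2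
  obtain ⟨f, f1, f2⟩ := exists_dihedral_hom r s
    (hgen _ _ (by simp [pow_succ, r1, r2]) (by simp [pow_succ, r1, r2]))
    (hgen _ _ (by simp [s1]) (by simp [s2]))
    (hgen _ _ (by simp [r1, r2, s1, s2]) (by simp [r1, r2, s1, s2]))
  refine ⟨(MulEquiv.ofBijective f ⟨?_, ?_⟩).symm⟩
  · rw [injective_iff_map_eq_one]
    have d5 := d1.symm
    have d6 : -t' ≠ t := d2.symm
    have d7 : -t ≠ t := d3.symm
    have d8 : -t' ≠ t' := d4.symm
    rintro (i | i) hi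
    · rw [f1] at hi
      have h1 : (r ^ i.val) t = t := by rw [hi]; rfl
      fin_cases i
      · rfl
      · exact (d5 (by simpa [ZMod.val, r1, r2] using h1)).elim
      · exact (d7 (by simpa [ZMod.val, pow_succ, r1, r2] using h1)).elim
      · exact (d6 (by simpa [ZMod.val, pow_succ, r1, r2] using h1)).elim
    · rw [f2] at hi
      have h1 : (s * r ^ i.val) t = t := by rw [hi]; rfl
      have h2 : (s * r ^ i.val) t' = t' := by rw [hi]; rfl
      fin_cases i
      · exact (d8 (by simpa [ZMod.val, r1, r2, s1, s2] using h2)).elim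
      · exact (d6 (by simpa [ZMod.val, r1, r2, s1, s2] using h1)).elim
      · exact (d7 (by simpa [ZMod.val, pow_succ, r1, r2, s1, s2] using h1)).elim
      · exact (d5 (by simpa [ZMod.val, pow_succ, r1, r2, s1, s2] using h1)).elim
  · intro g
    have hrange : ∀ h : E ≃ₐ[ℚ] E, h t = t → h ∈ f.range := by
      intro h h1
      have h2 : h t' ^ 2 = t' ^ 2 := by
        have : t' ^ 2 = algebraMap ℚ E (2 * x) - t ^ 2 := by
          rw [ht, ht', map_mul, map_ofNat]; ring
        rw [← map_pow, this, map_sub, map_pow, h1, AlgEquiv.commutes]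
      rcases sq_eq_sq_iff_eq_or_eq_neg.mp h2 with h2 | h2
      · rw [hgen h 1 h1 h2]; exact one_mem _
      · rw [hgen h s (h1.trans s1.symm) (h2.trans s2.symm)]
        exact ⟨.sr 0, by rw [f2]; simp⟩
    have hrr : r ∈ f.range := ⟨.r 1, by rw [f1]; exact pow_one r⟩
    have hmul : ∀ k : ℕ, (r ^ k * g) t = t → g ∈ f.range := by
      intro k hk
      exact (Subgroup.mul_mem_cancel_left _ (pow_mem hrr k)).mp (hrange _ hk)
    have hgu : g u = u ∨ g u = -u := by
      apply sq_eq_sq_iff_eq_or_eq_neg.mp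
      rw [← map_pow, hu, AlgEquiv.commutes]
    have hgt : g t ^ 2 = algebraMap ℚ E x + algebraMap ℚ E y * g u := by
      rw [← map_pow, ht, map_add, map_mul, AlgEquiv.commutes, AlgEquiv.commutes]
    rcases hgu with h | h
    · rw [h, ← ht] at hgt
      rcases sq_eq_sq_iff_eq_or_eq_neg.mp hgt with h' | h'
      · exact hmul 0 (by simp [h'])
      · exact hmul 2 (by simp [pow_succ, h', r1, r2])
    · rw [h, mul_neg, ← sub_eq_add_neg, ← ht'] at hgt
      rcases sq_eq_sq_iff_eq_or_eq_neg.mp hgt with h' | h'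
      · exact hmul 3 (by simp [pow_succ, h', r1, r2])
      · exact hmul 1 (by simp [pow_succ, h', r2])
end Construction

/-- The `ℚ`-algebra structure found on `Qbar` by unification is the one of a characteristic zero
division ring, which agrees with the one of `AlgebraicClosure` only propositionally. -/
instance isAlgClosure_Qbar : IsAlgClosure ℚ Qbar := by
  have h : @IsAlgClosure ℚ Qbar _ _ (AlgebraicClosure.instAlgebra ℚ) _ := inferInstance
  convert h
  exact Subsingleton.elim _ _

instance normal_galCl (K : IntermediateField ℚ Qbar) : Normal ℚ (galCl K) :=
  normalClosure.normal _ _ _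

instance isGalois_galCl (K : IntermediateField ℚ Qbar) : IsGalois ℚ (galCl K) := ⟨⟩

/-- The minimal polynomial of `t` divides a quartic and has the four distinct roots `±t, ±t'`. -/
theorem finrank_adjoin_quartic (t t' : Qbar) (x B : ℚ) (ht0 : t ≠ 0)
    (ht : t ^ 4 - algebraMap ℚ Qbar (2 * x) * t ^ 2 + algebraMap ℚ Qbar B = 0)
    (r : Qbar ≃ₐ[ℚ] Qbar) (r1 : r t = t') (r2 : r t' = -t) :
    Module.finrank ℚ ℚ⟮t⟯ = 4 := by
  obtain ⟨d1, d2, d3, d4⟩ := conjugates_distinct t t' ht0 r r1 r2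
  rw [adjoin.finrank (Algebra.IsIntegral.isIntegral t)]
  apply le_antisymm
  · have hdeg : (Polynomial.X ^ 4 - Polynomial.C (2 * x) * Polynomial.X ^ 2 + Polynomial.C B
        : Polynomial ℚ).natDegree = 4 := by compute_degree!
    rw [← hdeg]
    apply Polynomial.natDegree_le_of_dvd
    · apply minpoly.dvd
      simpa using ht
    · intro h
      rw [h] at hdeg
      simp at hdeg
  · have hroot : ∀ g : Qbar ≃ₐ[ℚ] Qbar,
        g t ∈ ((minpoly ℚ t).map (algebraMap ℚ Qbar)).roots := by
      intro g
      rw [Polynomial.mem_roots_map (minpoly.ne_zero (Algebra.IsIntegral.isIntegral t)),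
        ← Polynomial.aeval_def]
      have := Polynomial.aeval_algHom_apply (g : Qbar →ₐ[ℚ] Qbar) t (minpoly ℚ t)
      rw [minpoly.aeval, map_zero] at this
      exact this
    have h1 : t ∈ _ := hroot 1
    have h2 : r t ∈ _ := hroot r
    have h3 : r (r t) ∈ _ := hroot (r * r)
    have h4 : r (r (r t)) ∈ _ := hroot (r * r * r)
    simp only [r1, r2, map_neg] at h2 h3 h4
    classical
    have hcard : ({t, t', -t, -t'} : Finset Qbar).card = 4 := by
      have d5 : t' ≠ -t := fun h => d2 (by rw [h, neg_neg])
      have d6 : -t ≠ -t' := fun h => d1 (neg_injective h)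
      simp [d1, d2, d3, d4, d5, d6]
    rw [← hcard, ← Polynomial.natDegree_map (algebraMap ℚ Qbar)]
    apply Polynomial.card_le_degree_of_subset_roots
    intro z hz
    simp only [Finset.mem_val, Finset.mem_insert, Finset.mem_singleton] at hz
    rcases hz with rfl | rfl | rfl | rfl <;> assumption

/-- The conjugates of `t` are among `±t, ±t'`, as `X⁴ - 2x X² + B = (X² - t²)(X² - t'²)`, and `t'` is
one of them. -/
theorem galCl_adjoin (t t' : Qbar) (x B : ℚ)
    (ht : t ^ 4 - algebraMap ℚ Qbar (2 * x) * t ^ 2 + algebraMap ℚ Qbar B = 0)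
    (h : t ^ 2 + t' ^ 2 = algebraMap ℚ Qbar (2 * x))
    (r : Qbar ≃ₐ[ℚ] Qbar) (r1 : r t = t') :
    galCl ℚ⟮t⟯ = adjoin ℚ {t, t'} := by
  apply le_antisymm
  · rw [galCl, normalClosure_le_iff]
    rintro f z ⟨w, rfl⟩
    have htmem : t ∈ adjoin ℚ {t, t'} := subset_adjoin _ _ (by simp)
    have htmem' : t' ∈ adjoin ℚ {t, t'} := subset_adjoin _ _ (by simp)
    have hgen : f (AdjoinSimple.gen ℚ t) ∈ adjoin ℚ {t, t'} := by
      set g := f (AdjoinSimple.gen ℚ t) with hg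
      have h1 : g ^ 4 - algebraMap ℚ Qbar (2 * x) * g ^ 2 + algebraMap ℚ Qbar B = 0 := by
        have : (AdjoinSimple.gen ℚ t) ^ 4 - algebraMap ℚ ℚ⟮t⟯ (2 * x) * (AdjoinSimple.gen ℚ t) ^ 2
            + algebraMap ℚ ℚ⟮t⟯ B = 0 := Subtype.ext ht
        have := congrArg f this
        rwa [map_add, map_sub, map_mul, map_pow, map_pow, f.commutes, f.commutes, map_zero] at this
      have h2 : (g ^ 2 - t ^ 2) * (g ^ 2 - t' ^ 2) = 0 := by
        linear_combination h1 - ht + (t ^ 2 - g ^ 2) * h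
      rcases mul_eq_zero.mp h2 with h3 | h3
      · rcases sq_eq_sq_iff_eq_or_eq_neg.mp (sub_eq_zero.mp h3) with h4 | h4
        · rw [h4]; exact htmem
        · rw [h4]; exact neg_mem htmem
      · rcases sq_eq_sq_iff_eq_or_eq_neg.mp (sub_eq_zero.mp h3) with h4 | h4
        · rw [h4]; exact htmem'
        · rw [h4]; exact neg_mem htmem'
    obtain ⟨w, hw⟩ := w
    change f ⟨w, hw⟩ ∈ adjoin ℚ {t, t'}
    induction hw using adjoin_induction with
    | mem w hw => obtain rfl : w = t := hw; exact hgen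
    | algebraMap q =>
      have h : f (algebraMap ℚ ℚ⟮t⟯ q) = algebraMap ℚ Qbar q := f.commutes q
      exact h.symm ▸ IntermediateField.algebraMap_mem _ q
    | add w z hw hz h1 h2 => exact (map_add f ⟨w, hw⟩ ⟨z, hz⟩) ▸ add_mem h1 h2
    | inv w hw h1 => exact (map_inv₀ f ⟨w, hw⟩) ▸ inv_mem h1
    | mul w z hw hz h1 h2 => exact (map_mul f ⟨w, hw⟩ ⟨z, hz⟩) ▸ mul_mem h1 h2
  · rw [adjoin_le_iff]
    have htK : t ∈ galCl ℚ⟮t⟯ := le_normalClosure _ (mem_adjoin_simple_self ℚ t)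
    rintro z (rfl | rfl)
    · exact htK
    · exact normal_iff_forall_map_le'.mp (normal_galCl ℚ⟮t⟯) r ⟨t, htK, r1⟩

/-- If `B = x² - A y²`, then `ℚ(√(x + y √A))` is a `D₄`-quartic field whose Galois closure contains
`√A` and `√B`. -/
theorem exists_quartic (u v : Qbar) (A B x y : ℚ)
    (hu : u ^ 2 = algebraMap ℚ Qbar A) (hv : v ^ 2 = algebraMap ℚ Qbar B)
    (hA : ¬ IsSquare A) (hB : ¬ IsSquare B) (hAB : ¬ IsSquare (A * B))
    (hxy : x ^ 2 - A * y ^ 2 = B) :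
    ∃ K : IntermediateField ℚ Qbar, IsD4Quartic K ∧ u ∈ galCl K ∧ v ∈ galCl K := by
  have hB0 : B ≠ 0 := by rintro rfl; simp at hB
  have hy0 : y ≠ 0 := by
    rintro rfl
    exact hB ⟨x, by linarith⟩
  have hv0 : v ≠ 0 := by
    rintro rfl
    exact hB0 ((algebraMap ℚ Qbar).injective (by rw [← hv, map_zero]; ring))
  have hxy' : (algebraMap ℚ Qbar x + algebraMap ℚ Qbar y * u) *
      (algebraMap ℚ Qbar x - algebraMap ℚ Qbar y * u) = v ^ 2 := by
    rw [hv, ← hxy, map_sub, map_mul, map_pow, map_pow, ← hu]; ring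
  obtain ⟨t, ht⟩ := IsAlgClosed.exists_pow_nat_eq
    (algebraMap ℚ Qbar x + algebraMap ℚ Qbar y * u) (n := 2) (by norm_num)
  have ht0 : t ≠ 0 := by
    rintro rfl
    rw [← ht] at hxy'
    simp at hxy'
    exact hv0 (pow_eq_zero_iff two_ne_zero |>.mp hxy'.symm)
  obtain ⟨t', htt⟩ : ∃ t', t * t' = v := ⟨v / t, by field_simp⟩
  have ht' : t' ^ 2 = algebraMap ℚ Qbar x - algebraMap ℚ Qbar y * u := by
    apply mul_left_cancel₀ (pow_ne_zero 2 ht0)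
    rw [← mul_pow, htt, ← hxy', ht]
  obtain ⟨⟨r, r1, r2⟩, -⟩ :=
    exists_rotation_reflection t t' u v A B x y hu hv hA hB hAB ht ht' htt hv0
  have hsum : t ^ 2 + t' ^ 2 = algebraMap ℚ Qbar (2 * x) := by
    rw [ht, ht', map_mul, map_ofNat]; ring
  have ht4 : t ^ 4 - algebraMap ℚ Qbar (2 * x) * t ^ 2 + algebraMap ℚ Qbar B = 0 := by
    rw [← hsum, ← hv, ← htt]; ring
  have hcl := galCl_adjoin t t' x B ht4 hsum r r1
  have hT : t ∈ galCl ℚ⟮t⟯ := by rw [hcl]; exact subset_adjoin _ _ (by simp)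
  have hT' : t' ∈ galCl ℚ⟮t⟯ := by rw [hcl]; exact subset_adjoin _ _ (by simp)
  have hV : v ∈ galCl ℚ⟮t⟯ := by rw [← htt]; exact mul_mem hT hT'
  have hy0' : algebraMap ℚ Qbar y ≠ 0 := by simpa using hy0
  have hU : u ∈ galCl ℚ⟮t⟯ := by
    have : u = (t ^ 2 - algebraMap ℚ Qbar x) / algebraMap ℚ Qbar y := by
      rw [ht]; field_simp; ring
    rw [this]
    exact div_mem (sub_mem (pow_mem hT 2) (IntermediateField.algebraMap_mem _ x)) (IntermediateField.algebraMap_mem _ y)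
  refine ⟨ℚ⟮t⟯, ⟨finrank_adjoin_quartic t t' x B ht0 ht4 r r1 r2, ?_⟩, hU, hV⟩
  refine nonempty_dihedral (E := galCl ℚ⟮t⟯) ⟨t, hT⟩ ⟨t', hT'⟩ ⟨u, hU⟩ ⟨v, hV⟩ A B x y
    (Subtype.ext hu) (Subtype.ext hv) hA hB hAB (Subtype.ext ht) (Subtype.ext ht')
    (Subtype.ext htt) (fun h => hv0 (congrArg Subtype.val h)) ?_
  intro g h h1 h2
  have : (g : galCl ℚ⟮t⟯ →ₐ[ℚ] galCl ℚ⟮t⟯) = (h : galCl ℚ⟮t⟯ →ₐ[ℚ] galCl ℚ⟮t⟯) := by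
    apply algHom_ext_of_eq_adjoin _ hcl
    rintro z (rfl | rfl)
    · exact h1
    · exact h2
  ext z
  exact congrArg Subtype.val (DFunLike.congr_fun this z)

/-! ### The norm criterion -/

theorem mul_not_isSquare (a b : ℤ) (ha : Squarefree a) (hb : Squarefree b) (hab : a ≠ b) :
    ¬ IsSquare (a * b) := by
  rintro ⟨k, hk⟩
  have hak : a ∣ k := (ha.dvd_pow_iff_dvd two_ne_zero).mp ⟨b, by rw [sq, ← hk]⟩
  have hbk : b ∣ k := (hb.dvd_pow_iff_dvd two_ne_zero).mp ⟨a, by rw [sq, ← hk, mul_comm]⟩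
  have hkk : k * k ≠ 0 := hk ▸ mul_ne_zero ha.ne_zero hb.ne_zero
  have hab' : a ∣ b := by
    have : a * a ∣ a * b := hk ▸ mul_dvd_mul hak hak
    exact (mul_dvd_mul_iff_left ha.ne_zero).mp this
  have hba' : b ∣ a := by
    have : b * b ∣ a * b := hk ▸ mul_dvd_mul hbk hbk
    exact (mul_dvd_mul_iff_right hb.ne_zero).mp this
  rcases Int.associated_iff.mp (associated_of_dvd_dvd hab' hba') with h | h
  · exact hab h
  · have := mul_self_pos.mpr (left_ne_zero_of_mul hkk)
    rw [← hk, h] at this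
    nlinarith [mul_self_nonneg b]

theorem not_isSquare_of_squarefree (a : ℤ) (ha : Squarefree a) (ha1 : a ≠ 1) : ¬ IsSquare a := by
  simpa using mul_not_isSquare a 1 ha squarefree_one ha1

/-- `𝓕₄(Q)` is nonempty iff `b` is a norm of `ℚ(√a)`, or `-b` is a
norm of `ℚ(√a)`, or `-a` is a norm of `ℚ(√b)`. -/
theorem F4_nonempty_iff_norm_condition
    (a b : ℤ) (ha : Squarefree a) (hb : Squarefree b) (hab : a ≠ b)
    (ha0 : a ≠ 0) (ha1 : a ≠ 1) (hb0 : b ≠ 0) (hb1 : b ≠ 1)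
    (sa sb : Qbar) (hsa : sa ^ 2 = (a : Qbar)) (hsb : sb ^ 2 = (b : Qbar)) :
    (F4 (adjoin ℚ {sa, sb})).Nonempty ↔
      ((∃ x y : ℚ, x ^ 2 - (a : ℚ) * y ^ 2 = (b : ℚ)) ∨
       (∃ x y : ℚ, x ^ 2 - (a : ℚ) * y ^ 2 = -(b : ℚ)) ∨
       (∃ x y : ℚ, x ^ 2 - (b : ℚ) * y ^ 2 = -(a : ℚ))) := by
  have hA : ¬ IsSquare (a : ℚ) := by
    rw [Rat.isSquare_intCast_iff]; exact not_isSquare_of_squarefree a ha ha1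
  have hB : ¬ IsSquare (b : ℚ) := by
    rw [Rat.isSquare_intCast_iff]; exact not_isSquare_of_squarefree b hb hb1
  have hAB : ¬ IsSquare ((a : ℚ) * b) := by
    rw [← Int.cast_mul, Rat.isSquare_intCast_iff]; exact mul_not_isSquare a b ha hb hab
  have ha0' : (a : ℚ) ≠ 0 := Int.cast_ne_zero.mpr ha0
  have hb0' : (b : ℚ) ≠ 0 := Int.cast_ne_zero.mpr hb0
  have hsa' : sa ^ 2 = algebraMap ℚ Qbar a := by rw [hsa, map_intCast]
  have hsb' : sb ^ 2 = algebraMap ℚ Qbar b := by rw [hsb, map_intCast]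
  have hsab : (sa * sb) ^ 2 = algebraMap ℚ Qbar (a * b) := by rw [mul_pow, hsa', hsb', map_mul]
  constructor
  · rintro ⟨K, ⟨hdim, ⟨e⟩⟩, hle⟩
    have hK : FiniteDimensional ℚ K := FiniteDimensional.of_finrank_pos (by omega)
    have : FiniteDimensional ℚ (galCl K) :=
      inferInstanceAs (FiniteDimensional ℚ (normalClosure ℚ K Qbar))
    exact norm_condition_of_dihedral e a b
      ⟨sa, hle (subset_adjoin _ _ (by simp))⟩ ⟨sb, hle (subset_adjoin _ _ (by simp))⟩
      (Subtype.ext hsa') (Subtype.ext hsb') hA hB hAB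
  · have finish : ∀ K : IntermediateField ℚ Qbar, IsD4Quartic K → sa ∈ galCl K → sb ∈ galCl K →
        (F4 (adjoin ℚ {sa, sb})).Nonempty := by
      intro K hK h1 h2
      refine ⟨K, hK, ?_⟩
      rw [adjoin_le_iff]
      rintro z (rfl | rfl)
      · exact h1
      · exact h2
    have hsa0 : sa ≠ 0 := by
      rintro rfl
      exact ha0' ((algebraMap ℚ Qbar).injective (by rw [← hsa', map_zero]; ring))
    have hsb0 : sb ≠ 0 := by
      rintro rfl
      exact hb0' ((algebraMap ℚ Qbar).injective (by rw [← hsb', map_zero]; ring))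
    rintro (⟨x, y, h⟩ | ⟨x, y, h⟩ | ⟨x, y, h⟩)
    · obtain ⟨K, hK, h1, h2⟩ := exists_quartic sa sb a b x y hsa' hsb' hA hB hAB h
      exact finish K hK h1 h2
    -- Multiplying by the norm `-a` of `√a` turns `-b` into the norm `ab` from `ℚ(√a)`.
    · obtain ⟨K, hK, h1, h2⟩ := exists_quartic sa (sa * sb) a (a * b) (a * y) x hsa' hsab hA hAB
        (by rintro ⟨q, hq⟩; exact hB ⟨q / a, by field_simp; linarith⟩)
        (by linear_combination (-a : ℚ) * h)
      exact finish K hK h1 (by simpa [hsa0] using div_mem h2 h1)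
    · obtain ⟨K, hK, h1, h2⟩ := exists_quartic sb (sa * sb) b (a * b) (b * y) x hsb' hsab hB hAB
        (by rintro ⟨q, hq⟩; exact hA ⟨q / b, by field_simp; linarith⟩)
        (by linear_combination (-b : ℚ) * h)
      exact finish K hK (by simpa [hsb0] using div_mem h2 h1) h1
end
end

section
/- Let a, b be distinct square-free integers not equal to 0 or 1, and let g ∈ ℤ, h ∈ ℤ \ {0}, n ∈ ℤ_{>0} satisfy g² − h²·a = n²·b. Then K₀ = ℚ(√(g + h√a)) is a D₄-quartic field whose Galois closure contains ℚ(√a,√b), whose extended quadratic fields are ℚ(√a) and ℚ(√b), and whose unique quadratic subfield is ℚ(√a); in particular K₀ ∈ 𝓕_{4,a}(a,b). -/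
/-!
Put `t' = n√b / t`, so that `t'² = g - h√a` and `t t' = n√b`. Every automorphism of `ℚ̄` permutes
`{±t, ±t'}` and respects the partition into `{±t}` and `{±t'}`. Since `a` and `b` are square-free
and distinct from each other and from `1`, some automorphism negates `√a` and fixes `√b`, and some
automorphism negates `√b` and fixes `√a` (`exists_flip`); from them one builds `σ : t ↦ t' ↦ -t` and
`τ : t ↦ t, t' ↦ -t'` (`Datum.exists_gen`). Hence `t` has four conjugates, the normal closure of
`ℚ(t)` is `ℚ(t, t')`, and its Galois group is the full symmetry group `D₄` of the square with
vertices `t, t', -t, -t'` (`d4_of_action`).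

The situation is symmetric: `(t ± t')² = 2g ± 2n√b` and `(t + t')(t - t') = 2h√a`, so replacing
`(√a, √b, t, t')` by `(√b, √a, t + t', t - t')` gives data of the same shape (`Datum.dual`). Thus
`ℚ(t + t')` is a `D₄`-quartic field inside `ℚ(t, t')` containing `√b`, and both `ℚ(√a)` and `ℚ(√b)`
are extended quadratic fields.

There are no others. A `D₄`-quartic field is not normal over `ℚ`, so it corresponds to a non-normal
subgroup of `D₄`; an index-two subgroup containing a non-normal subgroup is not the cyclic one, and
only two index-two subgroups avoid the rotation `r 1` (`quadratic_pigeonhole`). Finally `ℚ(√b)` does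
not lie in `ℚ(t)`: otherwise `t' = n√b / t` would too, and `ℚ(t)` would be normal.

All of this except the square-freeness argument works for an arbitrary Galois extension `Ω / k` of
characteristic zero and is carried out there.
-/

open IntermediateField

noncomputable section

/-- `F` is an extended quadratic field of the `D₄`-quartic field `K`: a quadratic
subfield of the Galois closure `K̃` which occurs as the (unique) quadratic subfield of
some `D₄`-quartic field contained in `K̃`. -/
def ExtendedQuadratic (K F : IntermediateField ℚ Qbar) : Prop :=
  F ≤ galCl K ∧ Module.finrank ℚ F = 2 ∧
    ∃ K' : IntermediateField ℚ Qbar, IsD4Quartic K' ∧ K' ≤ galCl K ∧ F ≤ K'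

/-- The family `𝓕₄(a,b)` (for fixed square roots `sa` of `a` and `sb` of `b`): the
`D₄`-quartic fields whose Galois closure contains `ℚ(√a,√b)` and whose extended
quadratic fields are exactly `ℚ(√a)` and `ℚ(√b)`. -/
def F4ab (sa sb : Qbar) : Set (IntermediateField ℚ Qbar) :=
  {K | IsD4Quartic K ∧ adjoin ℚ {sa, sb} ≤ galCl K ∧
    ∀ F : IntermediateField ℚ Qbar,
      ExtendedQuadratic K F ↔ (F = adjoin ℚ {sa} ∨ F = adjoin ℚ {sb})}

/-- The subfamily `𝓕_{4,a}(a,b)`: fields in `𝓕₄(a,b)` whose unique quadratic subfield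
is `ℚ(√a)`. -/
def F4a (sa sb : Qbar) : Set (IntermediateField ℚ Qbar) :=
  {K | K ∈ F4ab sa sb ∧ adjoin ℚ {sa} ≤ K ∧
    ∀ F : IntermediateField ℚ Qbar,
      F ≤ K → Module.finrank ℚ F = 2 → F = adjoin ℚ {sa}}

/-! ### Recognising the dihedral group -/

/-- Elements satisfying the relations of the standard presentation of the dihedral group of order
eight define a homomorphism from it. -/
lemma d4_hom {G : Type*} [Group G] (σ τ : G) (hσ : σ ^ 4 = 1) (hτ : τ ^ 2 = 1)
    (hc : τ * σ * τ⁻¹ = σ⁻¹) :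
    ∃ f : DihedralGroup 4 →* G, (∀ i, f (.r i) = σ ^ i.val) ∧ ∀ i, f (.sr i) = τ * σ ^ i.val := by
  have hadd : ∀ i j : ZMod 4, σ ^ (i + j).val = σ ^ i.val * σ ^ j.val := fun i j => by
    rw [ZMod.val_add, ← pow_eq_pow_mod _ hσ, pow_add]
  have hsub : ∀ i j : ZMod 4, σ ^ (j - i).val = (σ ^ i.val)⁻¹ * σ ^ j.val := fun i j => by
    rw [eq_inv_mul_iff_mul_eq, ← hadd, add_sub_cancel]
  have hconj : ∀ k : ℕ, σ ^ k * τ = τ * (σ ^ k)⁻¹ := fun k => by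
    have h1 : τ * σ ^ k * τ⁻¹ = (σ ^ k)⁻¹ := by rw [← conj_pow, hc, inv_pow]
    rw [← h1, ← mul_assoc, ← mul_assoc, ← pow_two, hτ, one_mul,
      inv_eq_of_mul_eq_one_left (by rw [← pow_two, hτ] : τ * τ = 1)]
  refine ⟨⟨⟨fun d => match d with
    | .r i => σ ^ i.val
    | .sr i => τ * σ ^ i.val, pow_zero σ⟩, ?_⟩, fun _ => rfl, fun _ => rfl⟩
  rintro (i | i) (j | j)
  · exact hadd i j
  · change τ * σ ^ (j - i).val = σ ^ i.val * (τ * σ ^ j.val)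
    rw [hsub, ← mul_assoc, ← mul_assoc, hconj]
  · change τ * σ ^ (i + j).val = τ * σ ^ i.val * σ ^ j.val
    rw [hadd, mul_assoc]
  · change σ ^ (j - i).val = τ * σ ^ i.val * (τ * σ ^ j.val)
    rw [hsub, mul_assoc, ← mul_assoc (σ ^ i.val), hconj, ← mul_assoc, ← mul_assoc, ← pow_two, hτ,
      one_mul]

/-- An extension generated by `x` and `y` (in the weak form `hext`) whose automorphisms permute
`{±x, ±y}` as symmetries of the square with vertices `x, y, -x, -y`, and which has the quarter turn
`σ` and the diagonal reflection `τ` among its automorphisms, has automorphism group `D₄`. -/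
lemma d4_of_action {k L : Type*} [Field k] [Field L] [CharZero L] [Algebra k L] (x y : L)
    (hext : ∀ φ ψ : L ≃ₐ[k] L, φ x = ψ x → φ y = ψ y → φ = ψ)
    (σ τ : L ≃ₐ[k] L) (hσx : σ x = y) (hσy : σ y = -x) (hτx : τ x = x) (hτy : τ y = -y)
    (hx : x ≠ 0) (hy : y ≠ 0) (hxy : x ≠ y) (hxy' : x ≠ -y)
    (hact : ∀ φ : L ≃ₐ[k] L, ((φ x = x ∨ φ x = -x) ∧ (φ y = y ∨ φ y = -y)) ∨
      ((φ x = y ∨ φ x = -y) ∧ (φ y = x ∨ φ y = -x))) :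
    Nonempty ((L ≃ₐ[k] L) ≃* DihedralGroup 4) := by
  have s2x : (σ ^ 2) x = -x := by rw [pow_two, AlgEquiv.mul_apply, hσx, hσy]
  have s2y : (σ ^ 2) y = -y := by rw [pow_two, AlgEquiv.mul_apply, hσy, map_neg, hσx]
  have s3x : (σ ^ 3) x = -y := by rw [pow_succ, AlgEquiv.mul_apply, hσx, s2y]
  have s3y : (σ ^ 3) y = x := by rw [pow_succ, AlgEquiv.mul_apply, hσy, map_neg, s2x, neg_neg]
  obtain ⟨f, hr, hs⟩ := d4_hom σ τ
    (hext _ _ (by rw [pow_succ, AlgEquiv.mul_apply, hσx, s3y]; rfl)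
      (by rw [pow_succ, AlgEquiv.mul_apply, hσy, map_neg, s3x, neg_neg]; rfl))
    (hext _ _ (by rw [pow_two, AlgEquiv.mul_apply, hτx, hτx]; rfl)
      (by rw [pow_two, AlgEquiv.mul_apply, hτy, map_neg, hτy, neg_neg]; rfl)) (by
      rw [mul_inv_eq_iff_eq_mul, eq_inv_mul_iff_mul_eq]
      exact hext _ _ (by simp [hσx, hσy, hτx, hτy]) (by simp [hσx, hσy, hτx, hτy]))
  have r0 : f (.r 0) = 1 := (hr 0).trans rfl
  have r1 : f (.r 1) = σ := (hr 1).trans (pow_one σ)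
  have r2 : f (.r 2) = σ ^ 2 := hr 2
  have r3 : f (.r 3) = σ ^ 3 := hr 3
  have s0 : f (.sr 0) = τ := (hs 0).trans (mul_one τ)
  have s1 : f (.sr 1) = τ * σ := (hs 1).trans (congrArg (τ * ·) (pow_one σ))
  have s2 : f (.sr 2) = τ * σ ^ 2 := hs 2
  have s3 : f (.sr 3) = τ * σ ^ 3 := hs 3
  have t1x : (τ * σ) x = -y := by rw [AlgEquiv.mul_apply, hσx, hτy]
  have t1y : (τ * σ) y = -x := by rw [AlgEquiv.mul_apply, hσy, map_neg, hτx]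
  have t2x : (τ * σ ^ 2) x = -x := by rw [AlgEquiv.mul_apply, s2x, map_neg, hτx]
  have t2y : (τ * σ ^ 2) y = y := by rw [AlgEquiv.mul_apply, s2y, map_neg, hτy, neg_neg]
  have t3x : (τ * σ ^ 3) x = y := by rw [AlgEquiv.mul_apply, s3x, map_neg, hτy, neg_neg]
  have t3y : (τ * σ ^ 3) y = x := by rw [AlgEquiv.mul_apply, s3y, hτx]
  have hx2 : -x ≠ x := fun h => hx (neg_eq_self.mp h)
  have hy2 : -y ≠ y := fun h => hy (neg_eq_self.mp h)
  have h4 : ∀ i : ZMod 4, i = 0 ∨ i = 1 ∨ i = 2 ∨ i = 3 := by decide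
  refine ⟨(MulEquiv.ofBijective f ⟨?_, ?_⟩).symm⟩
  · rw [injective_iff_map_eq_one]
    rintro (i | i) h
    · have h1 : f (.r i) x = x := DFunLike.congr_fun h x
      rcases h4 i with rfl | rfl | rfl | rfl
      · rfl
      · exact absurd (by rw [← h1, r1, hσx]) hxy
      · exact absurd (by rwa [r2, s2x] at h1) hx2
      · exact absurd (by rwa [r3, s3x, eq_comm] at h1) hxy'
    · have h1 : f (.sr i) x = x := DFunLike.congr_fun h x
      have h2 : f (.sr i) y = y := DFunLike.congr_fun h y
      rcases h4 i with rfl | rfl | rfl | rfl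
      · exact absurd (by rwa [s0, hτy] at h2) hy2
      · exact absurd (by rwa [s1, t1x, eq_comm] at h1) hxy'
      · exact absurd (by rwa [s2, t2x] at h1) hx2
      · exact absurd (by rwa [s3, t3x, eq_comm] at h1) hxy
  · intro φ
    rcases hact φ with ⟨h1 | h1, h2 | h2⟩ | ⟨h1 | h1, h2 | h2⟩
    · exact ⟨.r 0, r0.trans (hext _ _ h1.symm h2.symm)⟩
    · exact ⟨.sr 0, s0.trans (hext _ _ (hτx.trans h1.symm) (hτy.trans h2.symm))⟩
    · exact ⟨.sr 2, s2.trans (hext _ _ (t2x.trans h1.symm) (t2y.trans h2.symm))⟩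
    · exact ⟨.r 2, r2.trans (hext _ _ (s2x.trans h1.symm) (s2y.trans h2.symm))⟩
    · exact ⟨.sr 3, s3.trans (hext _ _ (t3x.trans h1.symm) (t3y.trans h2.symm))⟩
    · exact ⟨.r 1, r1.trans (hext _ _ (hσx.trans h1.symm) (hσy.trans h2.symm))⟩
    · exact ⟨.r 3, r3.trans (hext _ _ (s3x.trans h1.symm) (s3y.trans h2.symm))⟩
    · exact ⟨.sr 1, s1.trans (hext _ _ (t1x.trans h1.symm) (t1y.trans h2.symm))⟩

/-! ### Index-two subgroups of the dihedral group -/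

/-- An index-two subgroup of `D₄` containing `r 1` is the rotation subgroup, all of whose subgroups
are normal in `D₄`. -/
lemma r_one_not_mem {H S : Subgroup (DihedralGroup 4)} (hHS : H ≤ S) (hH : ¬ H.Normal)
    (hS : S.index = 2) : DihedralGroup.r 1 ∉ S := by
  intro h1
  have hr : ∀ i, DihedralGroup.r i ∈ S := fun i => by
    have := S.pow_mem h1 i.val
    rwa [DihedralGroup.r_one_pow, ZMod.natCast_zmod_val] at this
  have hs : ∀ i, DihedralGroup.sr i ∉ S := fun i hi => by
    have : S = ⊤ := by
      rw [eq_top_iff]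
      rintro (j | j) -
      · exact hr j
      · have := S.mul_mem hi (hr (j - i))
        rwa [DihedralGroup.sr_mul_r, add_sub_cancel] at this
    rw [this, Subgroup.index_top] at hS
    omega
  refine hH ⟨?_⟩
  rintro (i | i) hi (j | j)
  · simpa using hi
  · simpa using H.inv_mem hi
  · exact absurd (hHS hi) (hs i)
  · exact absurd (hHS hi) (hs i)

/-- An index-two subgroup is the kernel of a character of order two. When `r 1` is outside it, this
character takes the value `-1` at `r 1`, so it is determined by its value at `sr 0`. -/
lemma eq_of_r_one_not_mem {S S' : Subgroup (DihedralGroup 4)} (hS : S.index = 2)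
    (hS' : S'.index = 2) (h1 : DihedralGroup.r 1 ∉ S) (h1' : DihedralGroup.r 1 ∉ S')
    (h : DihedralGroup.sr 0 ∈ S ↔ DihedralGroup.sr 0 ∈ S') : S = S' := by
  have key : ∀ k : ℕ, DihedralGroup.r (1 : ZMod 4) ^ k ∈ S ↔
      DihedralGroup.r (1 : ZMod 4) ^ k ∈ S' := fun k => by
    induction k with
    | zero => simp [one_mem]
    | succ k ih =>
      rw [pow_succ, Subgroup.mul_mem_iff_of_index_two hS, Subgroup.mul_mem_iff_of_index_two hS', ih]
      tauto
  have hr : ∀ i : ZMod 4, DihedralGroup.r i ∈ S ↔ DihedralGroup.r i ∈ S' := fun i => by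
    have := key i.val
    rwa [DihedralGroup.r_one_pow, ZMod.natCast_zmod_val] at this
  ext (i | i)
  · exact hr i
  · rw [← zero_add i, ← DihedralGroup.sr_mul_r, Subgroup.mul_mem_iff_of_index_two hS,
      Subgroup.mul_mem_iff_of_index_two hS', h, hr]

/-! ### Quadratic subfields of dihedral quartic fields -/

section Generic

variable {k Ω : Type*} [Field k] [Field Ω] [Algebra k Ω]

/-- `D₄`-quartic subextensions of an arbitrary extension `Ω / k`: those of degree four whose normal
closure inside `Ω` has automorphism group `D₄`. -/
def IsD4 (K : IntermediateField k Ω) : Prop :=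
  Module.finrank k K = 4 ∧
    Nonempty ((normalClosure k K Ω ≃ₐ[k] normalClosure k K Ω) ≃* DihedralGroup 4)

lemma IsD4.not_normal [IsGalois k Ω] {K : IntermediateField k Ω} (hK : IsD4 K) :
    ¬ Normal k K := by
  intro hn
  obtain ⟨h4, ⟨e⟩⟩ := hK
  rw [IntermediateField.normalClosure_of_normal K] at e
  have : FiniteDimensional k K := Module.finite_of_finrank_pos (by omega)
  have : IsGalois k K := ⟨⟩
  have h := IsGalois.card_aut_eq_finrank k K
  rw [Nat.card_congr e.toEquiv, DihedralGroup.nat_card, h4] at h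
  omega

lemma fixing_le_iff [IsGalois k Ω] {F K : IntermediateField k Ω} :
    F.fixingSubgroup ≤ K.fixingSubgroup ↔ K ≤ F := by
  refine ⟨fun h => ?_, fun h => IntermediateField.fixingSubgroup_le h⟩
  rw [← InfiniteGalois.fixedField_fixingSubgroup F]
  exact (IntermediateField.le_iff_le _ _).mpr h

/-- A field `L` with group `D₄` has at most two quadratic subfields lying in a `D₄`-quartic subfield
of `L`: they correspond to index-two subgroups of `D₄` avoiding `r 1`, and two of any three such
subgroups agree on whether they contain `sr 0`. -/
lemma quadratic_pigeonhole [IsGalois k Ω] {L F₁ F₂ F₃ : IntermediateField k Ω} [Normal k L]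
    (e : (L ≃ₐ[k] L) ≃* DihedralGroup 4)
    (h₁ : Module.finrank k F₁ = 2 ∧ ∃ K, IsD4 K ∧ K ≤ L ∧ F₁ ≤ K)
    (h₂ : Module.finrank k F₂ = 2 ∧ ∃ K, IsD4 K ∧ K ≤ L ∧ F₂ ≤ K)
    (h₃ : Module.finrank k F₃ = 2 ∧ ∃ K, IsD4 K ∧ K ≤ L ∧ F₃ ≤ K) :
    F₁ = F₂ ∨ F₁ = F₃ ∨ F₂ = F₃ := by
  -- `ρ` is restriction to `L`; its kernel lies in the fixing subgroup of every subfield of `L`, so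
  -- the images under `ρ` of these fixing subgroups still determine the subfields.
  let ρ : (Ω ≃ₐ[k] Ω) →* DihedralGroup 4 :=
    e.toMonoidHom.comp (AlgEquiv.restrictNormalHom L)
  have hρ : Function.Surjective ρ :=
    e.surjective.comp (AlgEquiv.restrictNormalHom_surjective Ω)
  have hker : ρ.ker = L.fixingSubgroup := by
    rw [← IntermediateField.restrictNormalHom_ker]
    ext x
    simp [ρ, MonoidHom.mem_ker]
  have hle : ∀ F, F ≤ L → ρ.ker ≤ F.fixingSubgroup := fun F h => hker ▸ fixing_le_iff.mpr h
  have key : ∀ F : IntermediateField k Ω,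
      (Module.finrank k F = 2 ∧ ∃ K, IsD4 K ∧ K ≤ L ∧ F ≤ K) →
      F ≤ L ∧ (F.fixingSubgroup.map ρ).index = 2 ∧
        DihedralGroup.r 1 ∉ F.fixingSubgroup.map ρ := by
    rintro F ⟨h2, K, hK, hKL, hFK⟩
    have hi : (F.fixingSubgroup.map ρ).index = 2 := by
      rw [Subgroup.index_map_eq _ hρ (hle F (hFK.trans hKL)),
        ← IntermediateField.finrank_eq_fixingSubgroup_index, h2]
    refine ⟨hFK.trans hKL, hi, r_one_not_mem (H := K.fixingSubgroup.map ρ)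
      (Subgroup.map_mono (fixing_le_iff.mpr hFK)) (fun hN => hK.not_normal ?_) hi⟩
    have := hN.comap ρ
    rw [Subgroup.comap_map_eq_self (hle K hKL), InfiniteGalois.normal_iff_isGalois] at this
    exact this.to_normal
  have fin : ∀ F F' : IntermediateField k Ω, F ≤ L → F' ≤ L →
      F.fixingSubgroup.map ρ = F'.fixingSubgroup.map ρ → F = F' := fun F F' h h' heq => by
    have := congrArg (Subgroup.comap ρ) heq
    rw [Subgroup.comap_map_eq_self (hle F h), Subgroup.comap_map_eq_self (hle F' h')] at this
    exact le_antisymm (fixing_le_iff.mp this.ge) (fixing_le_iff.mp this.le)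
  obtain ⟨l₁, i₁, n₁⟩ := key _ h₁
  obtain ⟨l₂, i₂, n₂⟩ := key _ h₂
  obtain ⟨l₃, i₃, n₃⟩ := key _ h₃
  have e₁₂ := fun h => fin _ _ l₁ l₂ (eq_of_r_one_not_mem i₁ i₂ n₁ n₂ h)
  have e₁₃ := fun h => fin _ _ l₁ l₃ (eq_of_r_one_not_mem i₁ i₃ n₁ n₃ h)
  have e₂₃ := fun h => fin _ _ l₂ l₃ (eq_of_r_one_not_mem i₂ i₃ n₂ n₃ h)
  tauto

/-! ### The dihedral extension generated by two conjugate square roots -/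

/-- The elements `sa = √a`, `sb = √b` of `Ω`, together with square roots `t`, `t'` of the conjugates
`g ± h√a` normalised by `t t' = n√b`, where `g`, `h`, `n` lie in `k` and `h n ≠ 0`. That `a`
and `b` are independent modulo squares of `k` is expressed by automorphisms negating exactly one of
`√a` and `√b`. The conditions are chosen to be preserved by the exchange of `a` and `b` in
`Datum.dual`. -/
structure Datum (k : Type*) {Ω : Type*} [Field k] [Field Ω] [Algebra k Ω] (sa sb t t' : Ω) :
    Prop where
  sa_sq : ∃ a : k, sa ^ 2 = algebraMap k Ω a
  sb_sq : ∃ b : k, sb ^ 2 = algebraMap k Ω b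
  sa_ne : sa ≠ 0
  sb_ne : sb ≠ 0
  flip_a : ∃ φ : Ω ≃ₐ[k] Ω, φ sa = -sa ∧ φ sb = sb
  flip_b : ∃ φ : Ω ≃ₐ[k] Ω, φ sb = -sb ∧ φ sa = sa
  rel : ∃ g h n : k, h ≠ 0 ∧ n ≠ 0 ∧ t ^ 2 = algebraMap k Ω g + algebraMap k Ω h * sa ∧
    t' ^ 2 = algebraMap k Ω g - algebraMap k Ω h * sa ∧ t * t' = algebraMap k Ω n * sb

namespace Datum

variable {sa sb t t' : Ω}

/-- The duality between the two conjugacy classes of non-normal quartic subfields: it exchanges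
`√a` and `√b` and replaces `t`, `t'` by their sum and difference. -/
lemma dual [CharZero Ω] (D : Datum k sa sb t t') : Datum k sb sa (t + t') (t - t') := by
  obtain ⟨g, h, n, hh, hn, h1, h2, h3⟩ := D.rel
  have two : (2 : k) ≠ 0 := fun h0 => by
    have h1 := congrArg (algebraMap k Ω) h0
    rw [map_ofNat, map_zero] at h1
    exact two_ne_zero h1
  refine ⟨D.sb_sq, D.sa_sq, D.sb_ne, D.sa_ne, D.flip_b, D.flip_a, 2 * g, 2 * n, 2 * h,
    mul_ne_zero two hn, mul_ne_zero two hh, ?_, ?_, ?_⟩ <;> simp only [map_mul, map_ofNat]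
  · linear_combination h1 + h2 + 2 * h3
  · linear_combination h1 + h2 - 2 * h3
  · linear_combination h1 - h2

/-- The elements `t, t', -t, -t'` are pairwise distinct. -/
lemma nondeg [CharZero Ω] (D : Datum k sa sb t t') : t ≠ 0 ∧ t' ≠ 0 ∧ t ≠ t' ∧ t ≠ -t' := by
  obtain ⟨g, h, n, hh, hn, h1, h2, h3⟩ := D.rel
  have hn' : algebraMap k Ω n * sb ≠ 0 :=
    mul_ne_zero ((map_ne_zero _).mpr hn) D.sb_ne
  have hh' : algebraMap k Ω h * sa ≠ 0 :=
    mul_ne_zero ((map_ne_zero _).mpr hh) D.sa_ne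
  have hs : t ^ 2 ≠ t' ^ 2 := fun e => hh' (by linear_combination (e - h1 + h2) / 2)
  rw [← h3] at hn'
  exact ⟨left_ne_zero_of_mul hn', right_ne_zero_of_mul hn', fun e => hs (by rw [e]),
    fun e => hs (by rw [e, neg_sq])⟩

/-- Automorphisms permute `{±t, ±t'}` and respect the partition into `{±t}` and `{±t'}`. -/
lemma act (D : Datum k sa sb t t') (φ : Ω ≃ₐ[k] Ω) :
    ((φ t = t ∨ φ t = -t) ∧ (φ t' = t' ∨ φ t' = -t')) ∨
      ((φ t = t' ∨ φ t = -t') ∧ (φ t' = t ∨ φ t' = -t)) := by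
  obtain ⟨a, ha⟩ := D.sa_sq
  obtain ⟨g, h, n, hh, hn, h1, h2, h3⟩ := D.rel
  have hφ : φ sa = sa ∨ φ sa = -sa := by
    rw [← sq_eq_sq_iff_eq_or_eq_neg, ← map_pow, ha, AlgEquiv.commutes]
  have e1 := congrArg φ h1
  have e2 := congrArg φ h2
  simp only [map_pow, map_add, map_sub, map_mul, AlgEquiv.commutes] at e1 e2
  simp only [← sq_eq_sq_iff_eq_or_eq_neg]
  rcases hφ with e | e <;> rw [e] at e1 e2
  · exact .inl ⟨e1.trans h1.symm, e2.trans h2.symm⟩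
  · exact .inr ⟨by rw [e1, h2]; ring, by rw [e2, h1]; ring⟩

/-- The quarter turn `σ` and the reflection `τ` of the square `t, t', -t, -t'` are realised by
automorphisms. -/
lemma exists_gen [CharZero Ω] (D : Datum k sa sb t t') :
    (∃ σ : Ω ≃ₐ[k] Ω, σ t = t' ∧ σ t' = -t) ∧ ∃ τ : Ω ≃ₐ[k] Ω, τ t = t ∧ τ t' = -t' := by
  obtain ⟨ht, ht', -, -⟩ := D.nondeg
  obtain ⟨α, αa, αb⟩ := D.flip_a
  obtain ⟨β, βb, βa⟩ := D.flip_b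
  obtain ⟨g, h, n, hh, hn, h1, h2, h3⟩ := D.rel
  -- An automorphism negating only `√a` exchanges the two conjugate squares and fixes `t * t'`.
  have hα : (α t = t' ∧ α t' = t) ∨ (α t = -t' ∧ α t' = -t) := by
    have e : α t = t' ∨ α t = -t' := by
      rw [← sq_eq_sq_iff_eq_or_eq_neg, ← map_pow, h1, h2]
      simp [αa, sub_eq_add_neg]
    have e3 : α t * α t' = t * t' := by rw [← map_mul, h3, map_mul, αb, AlgEquiv.commutes]
    rcases e with e | e <;> rw [e] at e3
    · exact .inl ⟨e, mul_left_cancel₀ ht' (by rw [e3, mul_comm])⟩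
    · exact .inr ⟨e, mul_left_cancel₀ ht' (by linear_combination -e3)⟩
  -- An automorphism negating only `√b` fixes both squares and negates `t * t'`.
  have hβ : (β t = t ∧ β t' = -t') ∨ (β t = -t ∧ β t' = t') := by
    have e : β t = t ∨ β t = -t := by
      rw [← sq_eq_sq_iff_eq_or_eq_neg, ← map_pow, h1]
      simp [βa]
    have e3 : β t * β t' = - (t * t') := by
      rw [← map_mul, h3, map_mul, βb, AlgEquiv.commutes, mul_neg]
    rcases e with e | e <;> rw [e] at e3
    · exact .inl ⟨e, mul_left_cancel₀ ht (by rw [e3, mul_neg])⟩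
    · exact .inr ⟨e, mul_left_cancel₀ ht (by linear_combination -e3)⟩
  -- If `β` is the other diagonal reflection, conjugating it by `α` gives `τ`.
  have hτ : ∃ τ : Ω ≃ₐ[k] Ω, τ t = t ∧ τ t' = -t' := by
    rcases hβ with hβ | ⟨b1, b2⟩
    · exact ⟨β, hβ⟩
    · refine ⟨α * β * α, ?_⟩
      rcases hα with ⟨a1, a2⟩ | ⟨a1, a2⟩ <;> simp [a1, a2, b1, b2]
  refine ⟨?_, hτ⟩
  obtain ⟨τ, b1, b2⟩ := hτ
  rcases hα with ⟨a1, a2⟩ | ⟨a1, a2⟩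
  · exact ⟨α * τ, by simp [a1, b1], by simp [a2, b2]⟩
  · exact ⟨τ * α, by simp [a1, b2], by simp [a2, b1]⟩

lemma sa_mem (D : Datum k sa sb t t') : sa ∈ adjoin k {t} := by
  obtain ⟨g, h, n, hh, hn, h1, h2, h3⟩ := D.rel
  have hh' : algebraMap k Ω h ≠ 0 := (map_ne_zero _).mpr hh
  have : sa = (t ^ 2 - algebraMap k Ω g) / algebraMap k Ω h := by
    rw [h1]; field_simp; ring
  rw [this]
  exact div_mem (sub_mem (pow_mem (mem_adjoin_simple_self k t) 2)
    (IntermediateField.algebraMap_mem _ g)) (IntermediateField.algebraMap_mem _ h)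

lemma adjoin_ne [CharZero Ω] (D : Datum k sa sb t t') : adjoin k {sa} ≠ adjoin k {sb} := by
  intro e
  obtain ⟨φ, h1, h2⟩ := D.flip_a
  have hφ : φ ∈ (adjoin k {sb}).fixingSubgroup := by
    have : adjoin k {sb} ≤ fixedField (Subgroup.zpowers φ) := by
      rw [adjoin_simple_le_iff]
      rintro ⟨ψ, hψ⟩
      have hz : Subgroup.zpowers φ ≤ MulAction.stabilizer (Ω ≃ₐ[k] Ω) sb :=
        Subgroup.zpowers_le.mpr h2
      exact hz hψ
    exact (IntermediateField.le_iff_le _ _).mp this (Subgroup.mem_zpowers φ)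
  have hm : sa ∈ adjoin k {sb} := e ▸ mem_adjoin_simple_self k sa
  have := (IntermediateField.mem_fixingSubgroup_iff _ _).mp hφ sa hm
  exact D.sa_ne (self_eq_neg.mp (this.symm.trans h1))

variable [IsGalois k Ω]

lemma normalClosure_eq [CharZero Ω] (D : Datum k sa sb t t') :
    normalClosure k (adjoin k {t}) Ω = adjoin k {t, t'} := by
  apply le_antisymm
  · have : Normal k (adjoin k {t, t'}) := by
      rw [IntermediateField.normal_iff_forall_map_le']
      intro φ
      rw [adjoin_map, adjoin_le_iff]
      have m1 : t ∈ adjoin k {t, t'} := subset_adjoin _ _ (by simp)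
      have m2 : t' ∈ adjoin k {t, t'} := subset_adjoin _ _ (by simp)
      rintro _ ⟨x, rfl | rfl, rfl⟩ <;>
        rcases D.act φ with ⟨e1 | e1, e2 | e2⟩ | ⟨e1 | e1, e2 | e2⟩ <;> simp [e1, e2, m1, m2]
    rw [normalClosure_le_iff_of_normal]
    exact adjoin.mono _ _ _ (by simp)
  · obtain ⟨⟨σ, h1, -⟩, -⟩ := D.exists_gen
    have ht : t ∈ normalClosure k (adjoin k {t}) Ω :=
      IntermediateField.le_normalClosure _ (mem_adjoin_simple_self k t)
    rw [adjoin_le_iff]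
    rintro x (rfl | rfl)
    · exact ht
    · exact (normal_iff_forall_map_le'.mp inferInstance σ) ⟨t, ht, h1⟩

/-- The minimal polynomial of `t` divides `(X² - g)² - h²a` and has the four roots `σ ^ j t`. -/
lemma finrank_eq [CharZero Ω] (D : Datum k sa sb t t') : Module.finrank k (adjoin k {t}) = 4 := by
  obtain ⟨a, ha⟩ := D.sa_sq
  obtain ⟨ht, ht', hne, hne'⟩ := D.nondeg
  obtain ⟨⟨σ, s1, s2⟩, -⟩ := D.exists_gen
  obtain ⟨g, h, n, hh, hn, h1, h2, h3⟩ := D.rel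
  have hint : IsIntegral k t := Algebra.IsIntegral.isIntegral t
  rw [adjoin.finrank hint]
  apply le_antisymm
  · have hdeg : ((Polynomial.X ^ 2 - Polynomial.C g) ^ 2 -
        Polynomial.C (h ^ 2 * a)).natDegree = 4 := by compute_degree!
    rw [← hdeg]
    refine Polynomial.natDegree_le_of_dvd (minpoly.dvd _ _ ?_) ?_
    · simp [h1, ← ha]
      ring
    · rintro h0
      rw [h0, Polynomial.natDegree_zero] at hdeg
      omega
  · have hroot : ∀ j : ℕ, (σ ^ j) t ∈ ((minpoly k t).map (algebraMap k Ω)).roots := fun j => by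
      have := Polynomial.aeval_algHom_apply (σ ^ j).toAlgHom t (minpoly k t)
      rw [minpoly.aeval, map_zero] at this
      rw [Polynomial.mem_roots (Polynomial.map_ne_zero (minpoly.ne_zero hint)), Polynomial.IsRoot,
        Polynomial.eval_map_algebraMap]
      exact this
    have r0 := hroot 0
    have r1 := hroot 1
    have r2 := hroot 2
    have r3 := hroot 3
    have e2 : (σ ^ 2) t = -t := by rw [pow_two, AlgEquiv.mul_apply, s1, s2]
    have e3 : (σ ^ 3) t = -t' := by rw [pow_succ', AlgEquiv.mul_apply, e2, map_neg, s1]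
    rw [pow_zero, AlgEquiv.one_apply] at r0
    rw [pow_one, s1] at r1
    rw [e2] at r2
    rw [e3] at r3
    classical
    have hc : ({t, t', -t, -t'} : Finset Ω).card = 4 := by
      have c1 : t ≠ -t := fun e => ht (self_eq_neg.mp e)
      have c2 : t' ≠ -t' := fun e => ht' (self_eq_neg.mp e)
      have c3 : t' ≠ -t := fun e => hne' (by rw [e, neg_neg])
      rw [Finset.card_insert_of_notMem, Finset.card_insert_of_notMem, Finset.card_pair] <;>
        simp [*]
    rw [← hc, ← Polynomial.natDegree_map (algebraMap k Ω)]
    apply Polynomial.card_le_degree_of_subset_roots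
    intro x hx
    simp only [Finset.mem_val, Finset.mem_insert, Finset.mem_singleton] at hx
    rcases hx with rfl | rfl | rfl | rfl <;> assumption

lemma isD4 [CharZero Ω] (D : Datum k sa sb t t') : IsD4 (adjoin k {t}) := by
  refine ⟨D.finrank_eq, ?_⟩
  obtain ⟨⟨σ, s1, s2⟩, τ, t1, t2⟩ := D.exists_gen
  obtain ⟨ht, ht', hne, hne'⟩ := D.nondeg
  have hL := D.normalClosure_eq
  have hN : Normal k (normalClosure k (adjoin k {t}) Ω) := inferInstance
  -- Equality of fields is transported as an equation about a variable `L`, since `L` occurs in the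
  -- type of its automorphism group.
  generalize normalClosure k (adjoin k {t}) Ω = L at hL hN
  have m1 : t ∈ L := hL ▸ subset_adjoin _ _ (by simp)
  have m2 : t' ∈ L := hL ▸ subset_adjoin _ _ (by simp)
  refine d4_of_action (⟨t, m1⟩ : L) ⟨t', m2⟩ ?_ (AlgEquiv.restrictNormalHom L σ)
    (AlgEquiv.restrictNormalHom L τ) ?_ ?_ ?_ ?_ ?_ ?_ ?_ ?_ ?_
  · intro φ ψ h1 h2
    apply AlgEquiv.coe_toAlgHom_injective
    refine algHom_ext_of_eq_adjoin k hL ?_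
    rintro x (rfl | rfl)
    · exact h1
    · exact h2
  · exact Subtype.ext ((AlgEquiv.restrictNormalHom_apply L σ _).trans s1)
  · exact Subtype.ext ((AlgEquiv.restrictNormalHom_apply L σ _).trans s2)
  · exact Subtype.ext ((AlgEquiv.restrictNormalHom_apply L τ _).trans t1)
  · exact Subtype.ext ((AlgEquiv.restrictNormalHom_apply L τ _).trans t2)
  · exact fun e => ht (congrArg Subtype.val e)
  · exact fun e => ht' (congrArg Subtype.val e)
  · exact fun e => hne (congrArg Subtype.val e)
  · exact fun e => hne' (congrArg Subtype.val e)
  · intro φ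
    obtain ⟨φ, rfl⟩ := AlgEquiv.restrictNormalHom_surjective Ω φ
    simp only [Subtype.ext_iff, AlgEquiv.restrictNormalHom_apply]
    exact D.act φ

lemma finrank_sa [CharZero Ω] (D : Datum k sa sb t t') : Module.finrank k (adjoin k {sa}) = 2 := by
  obtain ⟨a, ha⟩ := D.sa_sq
  obtain ⟨φ, h1, -⟩ := D.flip_a
  have hint : IsIntegral k sa := Algebra.IsIntegral.isIntegral sa
  rw [adjoin.finrank hint]
  apply le_antisymm
  · have hdeg : (Polynomial.X ^ 2 - Polynomial.C a).natDegree = 2 := by compute_degree!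
    rw [← hdeg]
    refine Polynomial.natDegree_le_of_dvd (minpoly.dvd _ _ (by simp [ha])) ?_
    rintro h0
    rw [h0, Polynomial.natDegree_zero] at hdeg
    omega
  · rw [minpoly.two_le_natDegree_iff hint]
    rintro ⟨c, rfl⟩
    rw [AlgEquiv.commutes] at h1
    exact D.sa_ne (self_eq_neg.mp h1)

/-- `k(t)` is a `D₄`-quartic field with extended quadratic fields `k(√a)` and `k(√b)`, and `k(√a)` is
its only quadratic subfield. -/
theorem main [CharZero Ω] (D : Datum k sa sb t t') :
    (IsD4 (adjoin k {t}) ∧ adjoin k {sa, sb} ≤ normalClosure k (adjoin k {t}) Ω ∧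
      ∀ F : IntermediateField k Ω,
        (F ≤ normalClosure k (adjoin k {t}) Ω ∧ Module.finrank k F = 2 ∧
          ∃ K', IsD4 K' ∧ K' ≤ normalClosure k (adjoin k {t}) Ω ∧ F ≤ K') ↔
        (F = adjoin k {sa} ∨ F = adjoin k {sb})) ∧
    adjoin k {sa} ≤ adjoin k {t} ∧
    ∀ F : IntermediateField k Ω, F ≤ adjoin k {t} → Module.finrank k F = 2 →
      F = adjoin k {sa} := by
  have hL := D.normalClosure_eq
  have hKL : adjoin k {t} ≤ normalClosure k (adjoin k {t}) Ω := IntermediateField.le_normalClosure _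
  have haK : adjoin k {sa} ≤ adjoin k {t} := adjoin_simple_le_iff.mpr D.sa_mem
  have hbK : adjoin k {sb} ≤ adjoin k {t + t'} := adjoin_simple_le_iff.mpr D.dual.sa_mem
  have hKL' : adjoin k {t + t'} ≤ normalClosure k (adjoin k {t}) Ω := by
    rw [hL, adjoin_simple_le_iff]
    exact add_mem (subset_adjoin _ _ (by simp)) (subset_adjoin _ _ (by simp))
  have ha : Module.finrank k (adjoin k {sa}) = 2 ∧ ∃ K', IsD4 K' ∧
      K' ≤ normalClosure k (adjoin k {t}) Ω ∧ adjoin k {sa} ≤ K' :=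
    ⟨D.finrank_sa, _, D.isD4, hKL, haK⟩
  have hb : Module.finrank k (adjoin k {sb}) = 2 ∧ ∃ K', IsD4 K' ∧
      K' ≤ normalClosure k (adjoin k {t}) Ω ∧ adjoin k {sb} ≤ K' :=
    ⟨D.dual.finrank_sa, _, D.dual.isD4, hKL', hbK⟩
  have hext : ∀ F : IntermediateField k Ω,
        (F ≤ normalClosure k (adjoin k {t}) Ω ∧ Module.finrank k F = 2 ∧
          ∃ K', IsD4 K' ∧ K' ≤ normalClosure k (adjoin k {t}) Ω ∧ F ≤ K') ↔
        (F = adjoin k {sa} ∨ F = adjoin k {sb}) := by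
    refine fun F => ⟨fun ⟨_, hF⟩ => ?_, ?_⟩
    · obtain ⟨e⟩ := D.isD4.2
      rcases quadratic_pigeonhole e hF ha hb with h | h | h
      · exact .inl h
      · exact .inr h
      · exact absurd h D.adjoin_ne
    · rintro (rfl | rfl)
      · exact ⟨haK.trans hKL, ha⟩
      · exact ⟨hbK.trans hKL', hb⟩
  refine ⟨⟨D.isD4, ?_, hext⟩, haK, fun F hF h2 => ?_⟩
  · rw [adjoin_le_iff]
    rintro x (rfl | rfl)
    · exact hKL (haK (mem_adjoin_simple_self k x))
    · exact hKL' (hbK (mem_adjoin_simple_self k x))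
  · refine ((hext F).mp ⟨hF.trans hKL, h2, _, D.isD4, hKL, hF⟩).resolve_right fun e => ?_
    -- If `√b` were in `k(t)`, then so would be `t'`, and `k(t)` would be its own normal closure.
    apply D.isD4.not_normal
    obtain ⟨g, h, n, hh, hn, h1, h2, h3⟩ := D.rel
    have mb : sb ∈ adjoin k {t} := hF (e ▸ mem_adjoin_simple_self k sb)
    have mt : t' ∈ adjoin k {t} := by
      have : t' = algebraMap k Ω n * sb / t := by
        rw [← h3, mul_div_cancel_left₀ _ D.nondeg.1]
      rw [this]
      exact div_mem (mul_mem (IntermediateField.algebraMap_mem _ n) mb) (mem_adjoin_simple_self k t)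
    rw [normal_iff_normalClosure_le, hL, adjoin_le_iff]
    rintro x (rfl | rfl)
    · exact mem_adjoin_simple_self k x
    · exact mt

end Datum

/-! ### Independence of square roots -/

/-- If `a` is neither a square nor `b` times a square, some automorphism negates `√a` and fixes `√b`.
Otherwise every automorphism fixing `√b` fixes `√a`, so all automorphisms change both signs
simultaneously; then `√a √b` is fixed by all of them and lies in `k`. -/
lemma exists_flip [IsGalois k Ω] {a b : k} {sa sb : Ω} (hsa : sa ^ 2 = algebraMap k Ω a)
    (hsb : sb ^ 2 = algebraMap k Ω b) (hb : b ≠ 0) (ha : ∀ c, c ^ 2 ≠ a)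
    (hab : ∀ c, c ^ 2 * b ≠ a) : ∃ φ : Ω ≃ₐ[k] Ω, φ sa = -sa ∧ φ sb = sb := by
  have sign : ∀ {s : Ω} {c : k}, s ^ 2 = algebraMap k Ω c → ∀ φ : Ω ≃ₐ[k] Ω,
      φ s = s ∨ φ s = -s := fun {s c} h φ => by
    rw [← sq_eq_sq_iff_eq_or_eq_neg, ← map_pow, h, AlgEquiv.commutes]
  by_contra! H
  have H' : ∀ φ : Ω ≃ₐ[k] Ω, φ sb = sb → φ sa = sa := fun φ h =>
    (sign hsa φ).resolve_right fun h' => H φ h' h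
  obtain ⟨ψ, hψ⟩ : ∃ ψ : Ω ≃ₐ[k] Ω, ψ sa ≠ sa := by
    by_contra! h
    obtain ⟨c, rfl⟩ := (InfiniteGalois.mem_range_algebraMap_iff_fixed sa).mpr h
    exact ha c ((algebraMap k Ω).injective (by rw [map_pow, hsa]))
  have ψa := (sign hsa ψ).resolve_left hψ
  have ψb := (sign hsb ψ).resolve_left fun h => hψ (H' ψ h)
  have hfix : ∀ φ : Ω ≃ₐ[k] Ω, φ (sa * sb) = sa * sb := fun φ => by
    rcases sign hsb φ with h | h
    · rw [map_mul, h, H' φ h]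
    · have h2 := H' (ψ * φ) (by rw [AlgEquiv.mul_apply, h, map_neg, ψb, neg_neg])
      rcases sign hsa φ with h3 | h3
      · rw [AlgEquiv.mul_apply, h3] at h2
        exact absurd h2 hψ
      · rw [map_mul, h, h3, neg_mul_neg]
  obtain ⟨c, hc⟩ := (InfiniteGalois.mem_range_algebraMap_iff_fixed _).mpr hfix
  have hc2 : c ^ 2 = a * b := (algebraMap k Ω).injective (by
    rw [map_pow, hc, mul_pow, hsa, hsb, map_mul])
  exact hab (c / b) (by field_simp; linear_combination hc2)

end Generic

/-! ### Square-free integers -/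

lemma rat_sq_ne {a : ℤ} (ha : Squarefree a) (ha1 : a ≠ 1) (q : ℚ) : q ^ 2 ≠ a := by
  intro h
  obtain ⟨m, rfl⟩ := Rat.isSquare_intCast_iff.mp ⟨q, by rw [← h, pow_two]⟩
  rcases Int.isUnit_iff.mp (ha m dvd_rfl) with rfl | rfl <;> exact ha1 rfl

lemma rat_sq_mul_ne {a b : ℤ} (ha : Squarefree a) (hb : Squarefree b) (hab : a ≠ b) (q : ℚ) :
    q ^ 2 * b ≠ a := by
  intro h
  obtain ⟨m, hm⟩ := Rat.isSquare_intCast_iff.mp (⟨q * b, by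
    push_cast; rw [← h]; ring⟩ : IsSquare ((a * b : ℤ) : ℚ))
  obtain ⟨c, rfl⟩ := (ha.dvd_pow_iff_dvd two_ne_zero).mp ⟨b, by rw [hm, pow_two]⟩
  have hb' : b = c * c * a := mul_left_cancel₀ ha.ne_zero (by rw [hm]; ring)
  rcases Int.isUnit_iff.mp (hb c ⟨a, hb'⟩) with rfl | rfl <;> exact hab (by rw [hb']; ring)

/-- The arithmetic input `g² - h²a = n²b` makes `t' = n√b / t` a square root of `g - h√a`. -/
lemma datum_of_int {Ω : Type*} [Field Ω] [CharZero Ω] [Algebra ℚ Ω] [IsGalois ℚ Ω]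
    {a b : ℤ} (ha : Squarefree a) (hb : Squarefree b) (hab : a ≠ b) (ha1 : a ≠ 1) (hb1 : b ≠ 1)
    {sa sb : Ω} (hsa : sa ^ 2 = (a : Ω)) (hsb : sb ^ 2 = (b : Ω))
    {g h n : ℤ} (hh : h ≠ 0) (hn : n ≠ 0) (heq : g ^ 2 - h ^ 2 * a = n ^ 2 * b)
    {t : Ω} (ht : t ^ 2 = (g : Ω) + (h : Ω) * sa) :
    Datum ℚ sa sb t (n * sb / t) := by
  have hsa' : sa ^ 2 = algebraMap ℚ Ω a := by rw [hsa, map_intCast]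
  have hsb' : sb ^ 2 = algebraMap ℚ Ω b := by rw [hsb, map_intCast]
  have ha0 : (a : ℚ) ≠ 0 := Int.cast_ne_zero.mpr ha.ne_zero
  have hb0 : (b : ℚ) ≠ 0 := Int.cast_ne_zero.mpr hb.ne_zero
  have heq' : (g : Ω) ^ 2 - h ^ 2 * a = n ^ 2 * b := mod_cast congrArg (Int.cast (R := Ω)) heq
  have hprod : t ^ 2 * (g - h * sa) = (n * sb) ^ 2 := by
    rw [ht, mul_pow, hsb, ← heq', ← hsa]
    ring
  have hsa0 : sa ≠ 0 := by
    rintro rfl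
    exact ha.ne_zero (Int.cast_injective (α := Ω) (by rw [← hsa]; simp))
  have hsb0 : sb ≠ 0 := by
    rintro rfl
    exact hb.ne_zero (Int.cast_injective (α := Ω) (by rw [← hsb]; simp))
  have ht0 : t ≠ 0 := by
    rintro rfl
    rw [zero_pow two_ne_zero, zero_mul, eq_comm] at hprod
    exact mul_ne_zero (Int.cast_ne_zero.mpr hn) hsb0 (pow_eq_zero_iff two_ne_zero |>.mp hprod)
  refine ⟨⟨a, hsa'⟩, ⟨b, hsb'⟩, hsa0, hsb0,
    exists_flip hsa' hsb' hb0 (rat_sq_ne ha ha1) (rat_sq_mul_ne ha hb hab),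
    exists_flip hsb' hsa' ha0 (rat_sq_ne hb hb1) (rat_sq_mul_ne hb ha hab.symm),
    g, h, n, Int.cast_ne_zero.mpr hh, Int.cast_ne_zero.mpr hn, ?_, ?_, ?_⟩ <;>
    simp only [map_intCast]
  · exact ht
  · rw [div_pow, ← hprod, mul_div_cancel_left₀ _ (pow_ne_zero 2 ht0)]
  · rw [mul_div_cancel₀ _ ht0]

/-- from the proof of Proposition 3.3: if `g² − h²a = n²b` with
`h ≠ 0`, `n > 0`, then `K₀ = ℚ(√(g + h√a))` is a `D₄`-quartic field whose Galois
closure contains `ℚ(√a,√b)`, whose extended quadratic fields are `ℚ(√a)` and `ℚ(√b)`,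
and whose unique quadratic subfield is `ℚ(√a)`; i.e. `K₀ ∈ 𝓕_{4,a}(a,b)`. -/
theorem K0_mem_F4a
    (a b : ℤ) (ha : Squarefree a) (hb : Squarefree b) (hab : a ≠ b)
    (ha0 : a ≠ 0) (ha1 : a ≠ 1) (hb0 : b ≠ 0) (hb1 : b ≠ 1)
    (sa sb : Qbar) (hsa : sa ^ 2 = (a : Qbar)) (hsb : sb ^ 2 = (b : Qbar))
    (g h n : ℤ) (hh : h ≠ 0) (hn : 0 < n) (heq : g ^ 2 - h ^ 2 * a = n ^ 2 * b)
    (t : Qbar) (ht : t ^ 2 = (g : Qbar) + (h : Qbar) * sa) :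
    adjoin ℚ {t} ∈ F4a sa sb := by
  -- The instance `Algebra ℚ Qbar` found here comes from the division ring structure of `Qbar`; it
  -- agrees with the one carried by `AlgebraicClosure ℚ` only up to unfolding.
  have : IsGalois ℚ Qbar := by
    have : Algebra.IsAlgebraic ℚ Qbar := AlgebraicClosure.isAlgebraic ℚ
    have : Normal ℚ Qbar := normal_iff.mpr fun x =>
      ⟨Algebra.IsIntegral.isIntegral x, IsAlgClosed.splits _⟩
    exact ⟨⟩
  exact (datum_of_int ha hb hab ha1 hb1 hsa hsb hh hn.ne' heq ht).main
end
end

section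
/- Let a, b be distinct square-free integers not equal to 0 or 1, let K = ℚ(√(g + h√a)) ∈ 𝓕_{4,a}(a,b) with g ∈ ℤ, h ∈ ℤ \ {0}, and let n be the positive integer satisfying g² − h²·a = n²·b. Then D_K ≤ C_{a,b}·n², where C_{a,b} = 256·|a|³·|b|³. In particular, |disc(K/ℚ)| ≤ |256·a²·(g² − h²·a)|. -/
/-! The element `t` generates `K` over `ℚ`, and `1, √a, t, t√a` are algebraic integers of `K`.
The discriminant of a `ℚ`-linearly independent family of `[K : ℚ]` algebraic integers is the
discriminant of `K` times the square of a nonzero integer (`abs_discr_le_of_isIntegral`), so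
`D_K` is at most the absolute value of the discriminant of `1, √a, t, t√a`.

That value is obtained from the power basis `1, t, t², t³`. Its discriminant is, up to sign, the
norm of `f'(t) = 4t³ - 4gt = 4h · t√a`, where `f = X⁴ - 2gX² + (g² - h²a)` is the minimal
polynomial of `t`. Since `N(t) = g² - h²a` and `N(√a)² = a⁴`, this is `256h⁴a²(g² - h²a)` in absolute
value. The change of basis from `1, √a, t, t√a` to the powers of `t` has determinant `±h²`, so the
factor `h⁴` cancels and `256a²|g² - h²a|` remains. This is the second bound; the first follows because
`|g² - h²a| = n²|b|` and `|a|, |b| ≥ 1`. -/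

open IntermediateField

noncomputable section

/-- A family of `[K : ℚ]` algebraic integers with nonzero discriminant spans a lattice whose
discriminant is at least that of `K` in absolute value. -/
theorem abs_discr_le_of_isIntegral {K : Type*} [Field K] [NumberField K] {m : ℕ}
    (hm : Module.finrank ℚ K = m) (v : Fin m → K) (hv : ∀ i, IsIntegral ℤ (v i))
    (hd : Algebra.discr ℚ v ≠ 0) :
    |(NumberField.discr K : ℚ)| ≤ |Algebra.discr ℚ v| := by
  classical
  have hcard : Fintype.card (Module.Free.ChooseBasisIndex ℤ (NumberField.RingOfIntegers K)) = m := by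
    rw [← Module.finrank_eq_card_chooseBasisIndex, NumberField.RingOfIntegers.rank, hm]
  let e : Module.Free.ChooseBasisIndex ℤ (NumberField.RingOfIntegers K) ≃ Fin m :=
    Fintype.equivFinOfCardEq hcard
  let B := (NumberField.integralBasis K).reindex e
  have hB : Algebra.discr ℚ B = (NumberField.discr K : ℚ) := by
    rw [NumberField.coe_discr, ← Algebra.discr_reindex ℚ (NumberField.integralBasis K) e,
      ← Module.Basis.coe_reindex]
  have key := Algebra.discr_of_matrix_vecMul (A := ℚ) B (B.toMatrix v)
  rw [Module.Basis.toMatrix_map_vecMul, hB] at key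
  have hint : IsIntegral ℤ (B.toMatrix v).det := by
    refine IsIntegral.det fun i j => ?_
    have := NumberField.integralBasis_repr_apply K ⟨v j, hv j⟩ (e.symm i)
    rw [Module.Basis.toMatrix_apply, Module.Basis.repr_reindex_apply]
    exact this ▸ isIntegral_algebraMap
  obtain ⟨z, hz⟩ := IsIntegrallyClosed.isIntegral_iff.1 hint
  have hz' : (B.toMatrix v).det = (z : ℚ) := by rw [← hz]; simp
  rw [hz'] at key
  have hz0 : z ≠ 0 := by
    rintro rfl
    simp [key] at hd
  have h1 : (1 : ℚ) ≤ (z : ℚ) ^ 2 := by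
    have : 0 < z ^ 2 := by positivity
    exact_mod_cast this
  rw [key, abs_mul, abs_of_nonneg (sq_nonneg (z : ℚ))]
  nlinarith [abs_nonneg (NumberField.discr K : ℚ)]

open Polynomial in
/-- The minimal polynomial of a quartic element `t` with `t² = g + h√a`. -/
theorem minpoly_eq_biquadratic {K : Type*} [Field K] [NumberField K] {a g h : ℤ} {s t : K}
    (hs : s ^ 2 = a) (ht : t ^ 2 = g + h * s) (hdeg : (minpoly ℚ t).natDegree = 4) :
    minpoly ℚ t = X ^ 4 - C (2 * g : ℚ) * X ^ 2 + C (g ^ 2 - h ^ 2 * a : ℚ) := by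
  have hdg : (X ^ 4 - C (2 * g : ℚ) * X ^ 2 + C (g ^ 2 - h ^ 2 * a : ℚ)).natDegree = 4 := by
    compute_degree!
  have hmon : (X ^ 4 - C (2 * g : ℚ) * X ^ 2 + C (g ^ 2 - h ^ 2 * a : ℚ)).Monic := by
    monicity!
  refine (Polynomial.eq_of_monic_of_dvd_of_natDegree_le
    (minpoly.monic (Algebra.IsIntegral.isIntegral t)) hmon (minpoly.dvd _ _ ?_) ?_).symm
  · simp only [map_add, map_sub, map_mul, map_pow, aeval_X, map_ofNat, map_intCast]
    linear_combination (t ^ 2 - g + h * s) * ht + h ^ 2 * hs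
  · rw [hdeg, hdg]

open Polynomial in
/-- For a quartic field generated by `t` with `t² = g + h√a`, the discriminant is bounded by that of
the order `ℤ[√a, t]`. -/
theorem abs_discr_quartic_le {K : Type*} [Field K] [NumberField K] {a g h : ℤ} {s t : K}
    (ha0 : a ≠ 0) (hh : h ≠ 0) (hc : g ^ 2 - h ^ 2 * a ≠ 0)
    (hs : s ^ 2 = a) (ht : t ^ 2 = g + h * s)
    (pb : PowerBasis ℚ K) (hgen : pb.gen = t) (hdim : pb.dim = 4) :
    |NumberField.discr K| ≤ |256 * a ^ 2 * (g ^ 2 - h ^ 2 * a)| := by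
  have hfr : Module.finrank ℚ K = 4 := by rw [pb.finrank, hdim]
  have hmin := minpoly_eq_biquadratic hs ht
    (by rw [← hgen, PowerBasis.natDegree_minpoly, hdim])
  have hhq : (h : ℚ) ≠ 0 := by exact_mod_cast hh
  have hNt : Algebra.norm ℚ t = (g ^ 2 - h ^ 2 * a : ℚ) := by
    rw [← hgen, Algebra.PowerBasis.norm_gen_eq_coeff_zero_minpoly, hgen, hmin, hdim]
    generalize (g ^ 2 - h ^ 2 * a : ℚ) = c
    simp [Even.neg_one_pow (by decide : Even 4)]
  have hNs : |Algebra.norm ℚ s| = (a : ℚ) ^ 2 := by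
    have h1 : Algebra.norm ℚ s ^ 2 = ((a : ℚ) ^ 2) ^ 2 := by
      have : s ^ 2 = algebraMap ℚ K (a : ℚ) := by rw [hs]; simp
      rw [← map_pow, this, Algebra.norm_algebraMap, hfr]
      ring
    rw [sq_eq_sq_iff_abs_eq_abs] at h1
    rw [h1, abs_of_nonneg (sq_nonneg _)]
  have hder : aeval t (minpoly ℚ t).derivative = algebraMap ℚ K (4 * h : ℚ) * (t * s) := by
    rw [hmin]
    generalize (g ^ 2 - h ^ 2 * a : ℚ) = c
    simp only [derivative_mul, derivative_X_pow, derivative_C,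
      map_add, map_sub, map_mul, map_pow, aeval_X, aeval_C, map_ofNat, map_intCast]
    norm_num
    linear_combination 4 * t * ht
  have hpow : |Algebra.discr ℚ pb.basis|
      = 256 * (h : ℚ) ^ 4 * a ^ 2 * |(g ^ 2 - h ^ 2 * a : ℚ)| := by
    rw [Algebra.discr_powerBasis_eq_norm, abs_mul, abs_pow, abs_neg, abs_one, one_pow, one_mul,
      hgen, hder, map_mul (Algebra.norm ℚ), map_mul (Algebra.norm ℚ), Algebra.norm_algebraMap, hfr, hNt, abs_mul, abs_mul, hNs,
      abs_of_nonneg (by positivity : (0 : ℚ) ≤ (4 * h) ^ 4)]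
    ring
  let w : Fin 4 → K := ![1, s, t, t * s]
  -- The columns of `P` express `1, t, t², t³` in terms of `1, s, t, ts`.
  let P : Matrix (Fin 4) (Fin 4) ℚ :=
    !![1, 0, (g : ℚ), 0; 0, 0, (h : ℚ), 0; 0, 1, 0, (g : ℚ); 0, 0, 0, (h : ℚ)]
  have hP : P.det = -(h : ℚ) ^ 2 := by
    simp [P, Matrix.det_succ_row_zero, Fin.sum_univ_succ, Fin.succAbove]
    ring
  have hB : Matrix.vecMul w (P.map (algebraMap ℚ K)) = pb.basis ∘ (finCongr hdim).symm := by
    ext i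
    rw [Function.comp_apply, PowerBasis.coe_basis, hgen]
    fin_cases i
    · simp [w, P, Matrix.vecMul, dotProduct, Fin.sum_univ_succ]
    · simp [w, P, Matrix.vecMul, dotProduct, Fin.sum_univ_succ]
    · simp [w, P, Matrix.vecMul, dotProduct, Fin.sum_univ_succ]
      linear_combination -ht
    · simp [w, P, Matrix.vecMul, dotProduct, Fin.sum_univ_succ]
      linear_combination -t * ht
  have hrel := Algebra.discr_of_matrix_vecMul w P
  rw [hB, Algebra.discr_reindex, hP] at hrel
  have hw : |Algebra.discr ℚ w| = 256 * (a : ℚ) ^ 2 * |(g ^ 2 - h ^ 2 * a : ℚ)| := by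
    rw [hrel, abs_mul, abs_of_nonneg (sq_nonneg _)] at hpow
    have h4 : (h : ℚ) ^ 4 ≠ 0 := by positivity
    apply mul_left_cancel₀ h4
    linear_combination hpow
  have hcq : (g ^ 2 - h ^ 2 * a : ℚ) ≠ 0 := by exact_mod_cast hc
  have hw0 : Algebra.discr ℚ w ≠ 0 := by
    rw [← abs_pos, hw]
    positivity
  have hsi : IsIntegral ℤ s := by
    refine IsIntegral.of_pow (n := 2) (by norm_num) ?_
    rw [hs]
    exact isIntegral_algebraMap (R := ℤ) (x := a)
  have hti : IsIntegral ℤ t := by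
    refine IsIntegral.of_pow (n := 2) (by norm_num) ?_
    rw [ht]
    exact (isIntegral_algebraMap (R := ℤ) (x := g)).add
      ((isIntegral_algebraMap (R := ℤ) (x := h)).mul hsi)
  have hwi : ∀ i, IsIntegral ℤ (w i) := by
    intro i
    fin_cases i
    · exact isIntegral_one
    · exact hsi
    · exact hti
    · exact hti.mul hsi
  have hle := abs_discr_le_of_isIntegral hfr w hwi hw0
  rw [hw] at hle
  have : ((|NumberField.discr K| : ℤ) : ℚ) ≤ ((|256 * a ^ 2 * (g ^ 2 - h ^ 2 * a)| : ℤ) : ℚ) := by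
    push_cast
    rw [abs_mul, abs_of_nonneg (by positivity : (0 : ℚ) ≤ 256 * (a : ℚ) ^ 2)]
    exact hle
  exact_mod_cast this

/-- Lemma 3.4: discriminant bound `D_K ≤ 256·|a|³·|b|³·n²` for
`K = ℚ(√(g + h√a)) ∈ 𝓕_{4,a}(a,b)` with `g² − h²a = n²b`; in particular
`|disc(K/ℚ)| ≤ |256·a²·(g² − h²a)|`. -/
theorem discriminant_bound
    (a b : ℤ) (ha : Squarefree a) (hb : Squarefree b) (hab : a ≠ b)
    (ha0 : a ≠ 0) (ha1 : a ≠ 1) (hb0 : b ≠ 0) (hb1 : b ≠ 1)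
    (sa sb : Qbar) (hsa : sa ^ 2 = (a : Qbar)) (hsb : sb ^ 2 = (b : Qbar))
    (g h n : ℤ) (hh : h ≠ 0) (hn : 0 < n) (heq : g ^ 2 - h ^ 2 * a = n ^ 2 * b)
    (t : Qbar) (ht : t ^ 2 = (g : Qbar) + (h : Qbar) * sa)
    (K : IntermediateField ℚ Qbar) (hKdef : K = adjoin ℚ {t})
    (hK : K ∈ F4a sa sb) :
    (absDisc K : ℤ) ≤ 256 * |a| ^ 3 * |b| ^ 3 * n ^ 2 ∧
    (absDisc K : ℤ) ≤ |256 * a ^ 2 * (g ^ 2 - h ^ 2 * a)| := by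
  have hb2 : g ^ 2 - h ^ 2 * a ≠ 0 := by
    rw [heq]
    positivity
  have hsecond : (absDisc K : ℤ) ≤ |256 * a ^ 2 * (g ^ 2 - h ^ 2 * a)| := by
    have hfr : Module.finrank ℚ K = 4 := hK.1.1.1
    have hsK : sa ∈ K := hK.2.1 (mem_adjoin_simple_self ℚ sa)
    subst hKdef
    have hti : IsIntegral ℚ t := (AlgebraicClosure.isAlgebraic ℚ).isAlgebraic t |>.isIntegral
    have hfd : FiniteDimensional ℚ (adjoin ℚ {t}) := adjoin.finiteDimensional hti
    have : NumberField (adjoin ℚ {t}) := ⟨⟩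
    have hs' : (⟨sa, hsK⟩ : adjoin ℚ {t}) ^ 2 = (a : adjoin ℚ {t}) :=
      Subtype.ext (by simpa using hsa)
    have ht' : (AdjoinSimple.gen ℚ t) ^ 2
        = (g : adjoin ℚ {t}) + (h : adjoin ℚ {t}) * ⟨sa, hsK⟩ :=
      Subtype.ext (by simpa using ht)
    have := abs_discr_quartic_le ha0 hh hb2 hs' ht' (adjoin.powerBasis hti)
      (adjoin.powerBasis_gen hti) (by rw [← (adjoin.powerBasis hti).finrank, hfr])
    rw [absDisc, dif_pos hfd, Int.natCast_natAbs]
    exact this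
  refine ⟨hsecond.trans ?_, hsecond⟩
  rw [heq, abs_mul, abs_mul, abs_mul, abs_pow, abs_pow, abs_of_pos hn]
  have h1 : 1 ≤ |a| := Int.one_le_abs ha0
  have h2 : 1 ≤ |b| := Int.one_le_abs hb0
  have h3 : |a| ^ 2 ≤ |a| ^ 3 := pow_le_pow_right₀ h1 (by norm_num)
  have h4 : |b| ≤ |b| ^ 3 := le_self_pow₀ h2 (by norm_num)
  calc |256| * |a| ^ 2 * (n ^ 2 * |b|) = 256 * (|a| ^ 2 * |b|) * n ^ 2 := by
        norm_num
        ring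
    _ ≤ 256 * (|a| ^ 3 * |b| ^ 3) * n ^ 2 := by gcongr
    _ = 256 * |a| ^ 3 * |b| ^ 3 * n ^ 2 := by ring
end
end
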